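/- Let (X, d, T) be a topological dynamical system. Then for every δ ∈ (0,1), the lower metric mean dimension satisfies mdim̲_M(X,d,T) = liminf_{ε→0} (1/log(1/ε)) · sup_{μ ∈ E_T(X)} inf{ h_μ^S(U, δ) : U a finite open cover of X with diam(U) ≤ ε }. -/

import Mathlib

open Filter MeasureTheory Set Topology

variable {X : Type*}

/-- The dynamical (Bowen) metric `d_n(x,y) = max_{0 ≤ k ≤ n-1} d(T^k x, T^k y)`. -/
noncomputable def dynDist [MetricSpace X] (T : X → X) (n : ℕ) (x y : X) : ℝ :=
  ⨆ k ∈ Finset.range n, dist (T^[k] x) (T^[k] y)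

/-- The open dynamical ball `B_n(x, ε) = {y : d_n(x,y) < ε}`. -/
def dynBall [MetricSpace X] (T : X → X) (n : ℕ) (x : X) (ε : ℝ) : Set X :=
  {y | dynDist T n x y < ε}

/-- `s_n(K, ε)`: the maximal cardinality of an `(n,ε)`-separated subset of `K`. -/
noncomputable def sepNum [MetricSpace X] (T : X → X) (n : ℕ) (K : Set X) (ε : ℝ) : ℕ :=
  sSup {m | ∃ E : Finset X, ↑E ⊆ K ∧
    (∀ x ∈ E, ∀ y ∈ E, x ≠ y → ε < dynDist T n x y) ∧ E.card = m}

/-- `S(K, ε) = limsup_n (1/n) log s_n(K, ε)`. -/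
noncomputable def sepEnt [MetricSpace X] (T : X → X) (K : Set X) (ε : ℝ) : EReal :=
  limsup (fun n : ℕ => ((Real.log (sepNum T n K ε) / n : ℝ) : EReal)) atTop

/-- `r_n(K, ε)`: the minimal cardinality of an `(n,ε)`-spanning set for `K`. -/
noncomputable def spanNum [MetricSpace X] (T : X → X) (n : ℕ) (K : Set X) (ε : ℝ) : ℕ :=
  sInf {m | ∃ F : Finset X, (∀ x ∈ K, ∃ y ∈ F, dynDist T n x y ≤ ε) ∧ F.card = m}

/-- `R(K, ε) = limsup_n (1/n) log r_n(K, ε)`. -/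
noncomputable def spanEnt [MetricSpace X] (T : X → X) (K : Set X) (ε : ℝ) : EReal :=
  limsup (fun n : ℕ => ((Real.log (spanNum T n K ε) / n : ℝ) : EReal)) atTop

/-- Upper metric mean dimension. -/
noncomputable def mdimUpper [MetricSpace X] (T : X → X) : EReal :=
  limsup (fun ε : ℝ => sepEnt T univ ε / ((Real.log (1 / ε) : ℝ) : EReal)) (𝓝[>] (0:ℝ))

/-- Lower metric mean dimension. -/
noncomputable def mdimLower [MetricSpace X] (T : X → X) : EReal :=
  liminf (fun ε : ℝ => sepEnt T univ ε / ((Real.log (1 / ε) : ℝ) : EReal)) (𝓝[>] (0:ℝ))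

/-- The ergodic `T`-invariant Borel probability measures. -/
def ergodicMeasures [MeasurableSpace X] (T : X → X) : Set (Measure X) :=
  {μ | IsProbabilityMeasure μ ∧ Ergodic T μ}

/-- `U` is a finite open cover of `X`. -/
def IsFiniteOpenCover [TopologicalSpace X] (U : Finset (Set X)) : Prop :=
  (∀ V ∈ U, IsOpen V) ∧ ⋃₀ (U : Set (Set X)) = univ

/-- The cover `U^n = ⋁_{i=0}^{n-1} T^{-i} U`. -/
def dynRefine (T : X → X) (U : Finset (Set X)) (n : ℕ) : Set (Set X) :=
  {V | ∃ f : Fin n → Set X, (∀ i, f i ∈ U) ∧ V = ⋂ i : Fin n, T^[(i : ℕ)] ⁻¹' f i}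

/-- `N(C)`: the minimal cardinality of a subcover of `C`. -/
noncomputable def coverNum (C : Set (Set X)) : ℕ :=
  sInf {m | ∃ F : Finset (Set X), ↑F ⊆ C ∧ ⋃₀ (F : Set (Set X)) = univ ∧ F.card = m}

/-- `N_μ(U^n, δ)`: minimal number of members of `U^n` needed to cover a set of measure ≥ δ. -/
noncomputable def shapiraNum [MeasurableSpace X] (T : X → X) (μ : Measure X)
    (U : Finset (Set X)) (n : ℕ) (δ : ℝ) : ℕ :=
  sInf {m | ∃ F : Finset (Set X), ↑F ⊆ dynRefine T U n ∧
    ENNReal.ofReal δ ≤ μ (⋃₀ (F : Set (Set X))) ∧ F.card = m}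

/-- Shapira's entropy `h_μ^S(U, δ) = limsup_n (1/n) log N_μ(U^n, δ)`. -/
noncomputable def shapiraEnt [MeasurableSpace X] (T : X → X) (μ : Measure X)
    (U : Finset (Set X)) (δ : ℝ) : EReal :=
  limsup (fun n : ℕ => ((Real.log (shapiraNum T μ U n δ) / n : ℝ) : EReal)) atTop

/-- `N_μ^δ(n, ε)`: smallest number of open `(n,ε)`-dynamical balls whose union has
measure `> δ`. -/
noncomputable def katokNum [MetricSpace X] [MeasurableSpace X] (T : X → X) (μ : Measure X)
    (n : ℕ) (ε δ : ℝ) : ℕ :=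
  sInf {m | ∃ F : Finset X, ENNReal.ofReal δ < μ (⋃ x ∈ F, dynBall T n x ε) ∧ F.card = m}

/-- Katok's entropy `h_μ^K(ε, δ) = limsup_n (1/n) log N_μ^δ(n, ε)`. -/
noncomputable def katokEnt [MetricSpace X] [MeasurableSpace X] (T : X → X) (μ : Measure X)
    (ε δ : ℝ) : EReal :=
  limsup (fun n : ℕ => ((Real.log (katokNum T μ n ε δ) / n : ℝ) : EReal)) atTop

/-- Lower Katok entropy `h̲_μ^K(ε, δ) = liminf_n (1/n) log N_μ^δ(n, ε)`. -/
noncomputable def katokEntLower [MetricSpace X] [MeasurableSpace X] (T : X → X) (μ : Measure X)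
    (ε δ : ℝ) : EReal :=
  liminf (fun n : ℕ => ((Real.log (katokNum T μ n ε δ) / n : ℝ) : EReal)) atTop

/-- `Ñ_μ^δ(n, ε)`: smallest number of sets of `d_n`-diameter ≤ ε whose union has
measure `> δ`. -/
noncomputable def katokNumTilde [MetricSpace X] [MeasurableSpace X] (T : X → X) (μ : Measure X)
    (n : ℕ) (ε δ : ℝ) : ℕ :=
  sInf {m | ∃ F : Finset (Set X), (∀ A ∈ F, ∀ x ∈ A, ∀ y ∈ A, dynDist T n x y ≤ ε) ∧
    ENNReal.ofReal δ < μ (⋃₀ (F : Set (Set X))) ∧ F.card = m}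

/-- Brin–Katok local entropy `h_μ^{BK}(x, ε) = limsup_n -(1/n) log μ(B_n(x, ε))`. -/
noncomputable def brinKatok [MetricSpace X] [MeasurableSpace X] (T : X → X) (μ : Measure X)
    (x : X) (ε : ℝ) : EReal :=
  limsup (fun n : ℕ => -(ENNReal.log (μ (dynBall T n x ε))) / (n : EReal)) atTop

/-- Lower Brin–Katok local entropy `h̲_μ^{BK}(x, ε) = liminf_n -(1/n) log μ(B_n(x, ε))`. -/
noncomputable def brinKatokLower [MetricSpace X] [MeasurableSpace X] (T : X → X) (μ : Measure X)
    (x : X) (ε : ℝ) : EReal :=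
  liminf (fun n : ℕ => -(ENNReal.log (μ (dynBall T n x ε))) / (n : EReal)) atTop

/-- Local entropy function `h_d(x, ε) = inf { S(K, ε) : K closed neighborhood of x }`. -/
noncomputable def locEnt [MetricSpace X] (T : X → X) (x : X) (ε : ℝ) : EReal :=
  ⨅ K ∈ {K : Set X | IsClosed K ∧ K ∈ 𝓝 x}, sepEnt T K ε

/-- Local spanning entropy `h̃_d(x, ε) = inf { R(K, ε) : K closed neighborhood of x }`. -/
noncomputable def locSpanEnt [MetricSpace X] (T : X → X) (x : X) (ε : ℝ) : EReal :=
  ⨅ K ∈ {K : Set X | IsClosed K ∧ K ∈ 𝓝 x}, spanEnt T K ε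

/-- `U_x^n`: the union of all cells of `U^n` containing `x`. -/
def dynCoverCell (T : X → X) (U : Finset (Set X)) (n : ℕ) (x : X) : Set X :=
  ⋃₀ {V | V ∈ dynRefine T U n ∧ x ∈ V}

/-!
Separated sets at scale `ε` are compared with finite open covers `U` of diameter comparable to `ε`,
and the bounded change of scale is invisible after division by `log (1 / ε)`. What remains is to
find, for every finite open cover `U` with entropy `h(U) = lim (1/n) log N(U^n)`, an ergodic measure
`μ` with `h(U) ≤ h_μ^S(U, δ)`.

Call a sequence of sets `A n` entropy negligible if at most `exp (n (h(U) - γ))` cells of `U^n`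
cover `A n`, for some `γ > 0`. For each large fixed `n`, the orbits spending a fraction at least `θ`
of their time in `A n` are negligible again. Hence every accumulation point `μ` of the empirical
measures of non-negligibly many orbits is an invariant measure with `μ (A n) → 0` for all negligible
sequences of open sets. Since any `exp (n r)` cells with `r < h(U)` form a negligible sequence,
they cannot have mass `δ`, and therefore `h(U) ≤ h_μ^S(U, δ)`.

An ergodic such `μ` is found without ergodic decomposition. Embed the probability measures into
`ℓ²` by a continuous injective map of the form `μ ↦ ∫ h dμ` and let `μ` have maximal norm among the
accumulation points. An invariant measure `ν` vanishing on negligible sequences is an average of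
empirical measures of which, up to `ν`-measure `o(1)`, all are close to accumulation points, so its
norm is at most that of `μ`. If `μ` is a convex combination of two invariant measures, both
inherit the vanishing property, and strict convexity of the norm makes them equal; so `μ` is
extreme, that is, ergodic.
-/

section CoveringNumbers

/-- The covering number of `A` by members of the family `C`. It is meaningful when finitely many
members of `C` cover `A`, and equal to `0` otherwise. -/
noncomputable def coverNumOn (C : Set (Set X)) (A : Set X) : ℕ :=
  sInf {m | ∃ F : Finset (Set X), ↑F ⊆ C ∧ A ⊆ ⋃₀ (F : Set (Set X)) ∧ F.card = m}

variable {C C' : Set (Set X)} {A B : Set X}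

theorem coverNumOn_le_card {F : Finset (Set X)} (hF : ↑F ⊆ C) (hA : A ⊆ ⋃₀ (F : Set (Set X))) :
    coverNumOn C A ≤ F.card :=
  Nat.sInf_le ⟨F, hF, hA, rfl⟩

theorem exists_card_eq_coverNumOn (hC : C.Finite) (hA : A ⊆ ⋃₀ C) :
    ∃ F : Finset (Set X), ↑F ⊆ C ∧ A ⊆ ⋃₀ (F : Set (Set X)) ∧ F.card = coverNumOn C A :=
  Nat.sInf_mem
    (show {m | ∃ F : Finset (Set X), ↑F ⊆ C ∧ A ⊆ ⋃₀ (F : Set (Set X)) ∧ F.card = m}.Nonempty from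
      ⟨_, hC.toFinset, by simp, by simpa using hA, rfl⟩)

theorem coverNumOn_empty (C : Set (Set X)) : coverNumOn C ∅ = 0 :=
  Nat.le_zero.1 (coverNumOn_le_card (F := ∅) (by simp) (by simp))

theorem coverNumOn_pos (hC : C.Finite) (hA : A ⊆ ⋃₀ C) (hne : A.Nonempty) :
    0 < coverNumOn C A := by
  obtain ⟨F, -, hAF, hcard⟩ := exists_card_eq_coverNumOn hC hA
  obtain ⟨x, hx⟩ := hne
  obtain ⟨V, hV, -⟩ := hAF hx
  exact hcard ▸ Finset.card_pos.2 ⟨V, hV⟩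

theorem coverNumOn_mono (hC : C.Finite) (hB : B ⊆ ⋃₀ C) (h : A ⊆ B) :
    coverNumOn C A ≤ coverNumOn C B := by
  obtain ⟨F, hF, hBF, hcard⟩ := exists_card_eq_coverNumOn hC hB
  exact hcard ▸ coverNumOn_le_card hF (h.trans hBF)

theorem coverNumOn_union_le (hC : C.Finite) (hA : A ⊆ ⋃₀ C) (hB : B ⊆ ⋃₀ C) :
    coverNumOn C (A ∪ B) ≤ coverNumOn C A + coverNumOn C B := by
  classical
  obtain ⟨F, hF, hAF, hFcard⟩ := exists_card_eq_coverNumOn hC hA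
  obtain ⟨G, hG, hBG, hGcard⟩ := exists_card_eq_coverNumOn hC hB
  rw [← hFcard, ← hGcard]
  refine (coverNumOn_le_card (by simp [hF, hG]) ?_).trans (Finset.card_union_le F G)
  rw [Finset.coe_union, sUnion_union]
  exact union_subset_union hAF hBG

theorem coverNumOn_biUnion_le {ι : Type*} (hC : C.Finite) (s : Finset ι) {A : ι → Set X}
    (hA : ∀ i ∈ s, A i ⊆ ⋃₀ C) :
    coverNumOn C (⋃ i ∈ s, A i) ≤ ∑ i ∈ s, coverNumOn C (A i) := by
  classical
  induction s using Finset.induction_on with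
  | empty => simp [coverNumOn_empty]
  | insert a s ha ih =>
    rw [Finset.forall_mem_insert] at hA
    rw [Finset.set_biUnion_insert, Finset.sum_insert ha]
    exact (coverNumOn_union_le hC hA.1 (iUnion₂_subset hA.2)).trans (by gcongr; exact ih hA.2)

theorem exists_finset_of_refines (h : ∀ V ∈ C', ∃ W ∈ C, V ⊆ W) {F : Finset (Set X)}
    (hF : ↑F ⊆ C') :
    ∃ G : Finset (Set X), ↑G ⊆ C ∧ ⋃₀ (F : Set (Set X)) ⊆ ⋃₀ (G : Set (Set X)) ∧
      G.card ≤ F.card := by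
  classical
  choose! φ hφC hφ using h
  refine ⟨F.image φ, ?_, ?_, Finset.card_image_le⟩
  · rw [Finset.coe_image]
    exact image_subset_iff.2 fun V hV => hφC V (hF hV)
  · rintro x ⟨V, hV, hx⟩
    exact ⟨φ V, Finset.mem_image_of_mem φ hV, hφ V (hF hV) hx⟩

theorem coverNumOn_le_of_refines (hC' : C'.Finite) (hA : A ⊆ ⋃₀ C')
    (h : ∀ V ∈ C', ∃ W ∈ C, V ⊆ W) : coverNumOn C A ≤ coverNumOn C' A := by
  obtain ⟨F, hF, hAF, hcard⟩ := exists_card_eq_coverNumOn hC' hA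
  obtain ⟨G, hG, hFG, hle⟩ := exists_finset_of_refines h hF
  exact (coverNumOn_le_card hG (hAF.trans hFG)).trans (hle.trans_eq hcard)

end CoveringNumbers

section RefinedCovers

variable {T : X → X} {U U' : Finset (Set X)} {m n : ℕ}

theorem mem_dynRefine_iff {V : Set X} :
    V ∈ dynRefine T U n ↔
      ∃ g : ℕ → Set X, (∀ i < n, g i ∈ U) ∧ V = {x | ∀ i < n, T^[i] x ∈ g i} := by
  constructor
  · rintro ⟨f, hf, rfl⟩
    refine ⟨fun i => if h : i < n then f ⟨i, h⟩ else univ, fun i hi => by simpa [hi] using hf _, ?_⟩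
    ext x
    simp only [mem_iInter, mem_preimage, mem_ofPred_eq]
    exact ⟨fun h i hi => by simpa [hi] using h ⟨i, hi⟩, fun h i => by simpa using h i i.2⟩
  · rintro ⟨g, hg, rfl⟩
    refine ⟨fun i => g i, fun i => hg i i.2, ?_⟩
    ext x
    simp only [mem_iInter, mem_preimage, mem_ofPred_eq]
    exact ⟨fun h i => h i i.2, fun h i hi => h ⟨i, hi⟩⟩

theorem dynRefine_finite (T : X → X) (U : Finset (Set X)) (n : ℕ) : (dynRefine T U n).Finite := by
  refine (finite_range fun f : Fin n → U => ⋂ i : Fin n, T^[(i : ℕ)] ⁻¹' (f i : Set X)).subset ?_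
  rintro V ⟨f, hf, rfl⟩
  exact ⟨fun i => ⟨f i, hf i⟩, rfl⟩

theorem sUnion_dynRefine (T : X → X) (hU : ⋃₀ (U : Set (Set X)) = univ) (n : ℕ) :
    ⋃₀ dynRefine T U n = univ := by
  refine eq_univ_of_forall fun x => ?_
  have hx : ∀ i : ℕ, ∃ V ∈ U, T^[i] x ∈ V := fun i => by
    simpa using hU.symm.subset (mem_univ (T^[i] x))
  choose g hgU hg using hx
  exact ⟨_, mem_dynRefine_iff.2 ⟨g, fun i _ => hgU i, rfl⟩, fun i _ => hg i⟩

theorem dynRefine_refines_of_le (h : m ≤ n) :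
    ∀ V ∈ dynRefine T U n, ∃ W ∈ dynRefine T U m, V ⊆ W := by
  intro V hV
  obtain ⟨g, hg, rfl⟩ := mem_dynRefine_iff.1 hV
  exact ⟨_, mem_dynRefine_iff.2 ⟨g, fun i hi => hg i (hi.trans_le h), rfl⟩,
    fun x hx i hi => hx i (hi.trans_le h)⟩

theorem dynRefine_refines (h : ∀ V ∈ U', ∃ W ∈ U, V ⊆ W) :
    ∀ V ∈ dynRefine T U' n, ∃ W ∈ dynRefine T U n, V ⊆ W := by
  intro V hV
  obtain ⟨g, hg, rfl⟩ := mem_dynRefine_iff.1 hV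
  choose! φ hφU hφ using h
  exact ⟨_, mem_dynRefine_iff.2 ⟨fun i => φ (g i), fun i hi => hφU _ (hg i hi), rfl⟩,
    fun x hx i hi => hφ _ (hg i hi) (hx i hi)⟩

theorem inter_preimage_mem_dynRefine {V W : Set X} (hV : V ∈ dynRefine T U m)
    (hW : W ∈ dynRefine T U n) : V ∩ T^[m] ⁻¹' W ∈ dynRefine T U (m + n) := by
  obtain ⟨g, hg, rfl⟩ := mem_dynRefine_iff.1 hV
  obtain ⟨g', hg', rfl⟩ := mem_dynRefine_iff.1 hW
  refine mem_dynRefine_iff.2 ⟨fun i => if i < m then g i else g' (i - m), fun i hi => ?_, ?_⟩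
  · by_cases h : i < m
    · simpa [h] using hg i h
    · simpa [h] using hg' (i - m) (by omega)
  ext x
  simp only [mem_inter_iff, mem_ofPred_eq, mem_preimage, ← Function.iterate_add_apply]
  constructor
  · rintro ⟨hg, hg'⟩ i hi
    by_cases h : i < m
    · simpa [h] using hg i h
    · simpa [h, Nat.sub_add_cancel (not_lt.1 h)] using hg' (i - m) (by omega)
  · intro h
    exact ⟨fun i hi => by simpa [hi] using h i (by omega),
      fun i hi => by simpa using h (i + m) (by omega)⟩

theorem isOpen_of_mem_dynRefine [TopologicalSpace X] (hT : Continuous T)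
    (hU : ∀ V ∈ U, IsOpen V) {V : Set X} (hV : V ∈ dynRefine T U n) : IsOpen V := by
  obtain ⟨f, hf, rfl⟩ := hV
  exact isOpen_iInter_of_finite fun i => (hU _ (hf i)).preimage (hT.iterate i)

/-- The least number of cells of `U^n` needed to cover `A`. -/
noncomputable def dynCoverNum (T : X → X) (U : Finset (Set X)) (n : ℕ) (A : Set X) : ℕ :=
  coverNumOn (dynRefine T U n) A

variable {A B : Set X}

theorem subset_sUnion_dynRefine (T : X → X) (hU : ⋃₀ (U : Set (Set X)) = univ) (n : ℕ)
    (A : Set X) : A ⊆ ⋃₀ dynRefine T U n :=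
  (subset_univ A).trans_eq (sUnion_dynRefine T hU n).symm

theorem exists_card_eq_dynCoverNum (T : X → X) (hU : ⋃₀ (U : Set (Set X)) = univ) (n : ℕ)
    (A : Set X) :
    ∃ F : Finset (Set X), ↑F ⊆ dynRefine T U n ∧ A ⊆ ⋃₀ (F : Set (Set X)) ∧
      F.card = dynCoverNum T U n A :=
  exists_card_eq_coverNumOn (dynRefine_finite T U n) (subset_sUnion_dynRefine T hU n A)

theorem dynCoverNum_mono (T : X → X) (hU : ⋃₀ (U : Set (Set X)) = univ) (n : ℕ) (h : A ⊆ B) :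
    dynCoverNum T U n A ≤ dynCoverNum T U n B :=
  coverNumOn_mono (dynRefine_finite T U n) (subset_sUnion_dynRefine T hU n B) h

theorem dynCoverNum_mono_time (T : X → X) (hU : ⋃₀ (U : Set (Set X)) = univ) (h : m ≤ n)
    (A : Set X) : dynCoverNum T U m A ≤ dynCoverNum T U n A :=
  coverNumOn_le_of_refines (dynRefine_finite T U n) (subset_sUnion_dynRefine T hU n A)
    (dynRefine_refines_of_le h)

theorem dynCoverNum_union_le (T : X → X) (hU : ⋃₀ (U : Set (Set X)) = univ) (n : ℕ)
    (A B : Set X) : dynCoverNum T U n (A ∪ B) ≤ dynCoverNum T U n A + dynCoverNum T U n B :=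
  coverNumOn_union_le (dynRefine_finite T U n) (subset_sUnion_dynRefine T hU n A)
    (subset_sUnion_dynRefine T hU n B)

theorem dynCoverNum_biUnion_le {ι : Type*} (T : X → X) (hU : ⋃₀ (U : Set (Set X)) = univ)
    (n : ℕ) (s : Finset ι) (A : ι → Set X) :
    dynCoverNum T U n (⋃ i ∈ s, A i) ≤ ∑ i ∈ s, dynCoverNum T U n (A i) :=
  coverNumOn_biUnion_le (dynRefine_finite T U n) s
    fun i _ => subset_sUnion_dynRefine T hU n (A i)

theorem dynCoverNum_univ_pos [Nonempty X] (T : X → X) (hU : ⋃₀ (U : Set (Set X)) = univ)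
    (n : ℕ) : 0 < dynCoverNum T U n univ :=
  coverNumOn_pos (dynRefine_finite T U n) (subset_sUnion_dynRefine T hU n univ) univ_nonempty

theorem dynCoverNum_zero_le_one (T : X → X) (U : Finset (Set X)) (A : Set X) :
    dynCoverNum T U 0 A ≤ 1 :=
  coverNumOn_le_card (F := {univ}) (by simpa using mem_dynRefine_iff.2 ⟨fun _ => univ, by simp⟩)
    (by simp)

theorem dynCoverNum_add_le (T : X → X) (hU : ⋃₀ (U : Set (Set X)) = univ) (m n : ℕ)
    (A B : Set X) :
    dynCoverNum T U (m + n) (A ∩ T^[m] ⁻¹' B) ≤ dynCoverNum T U m A * dynCoverNum T U n B := by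
  classical
  obtain ⟨F, hF, hAF, hFcard⟩ := exists_card_eq_dynCoverNum T hU m A
  obtain ⟨G, hG, hBG, hGcard⟩ := exists_card_eq_dynCoverNum T hU n B
  rw [← hFcard, ← hGcard, ← Finset.card_product]
  refine (coverNumOn_le_card (F := (F ×ˢ G).image fun p => p.1 ∩ T^[m] ⁻¹' p.2) ?_ ?_).trans
    Finset.card_image_le
  · rw [Finset.coe_image, image_subset_iff]
    intro p hp
    rw [Finset.mem_coe, Finset.mem_product] at hp
    exact inter_preimage_mem_dynRefine (hF hp.1) (hG hp.2)
  · rintro x ⟨hxA, hxB⟩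
    obtain ⟨V, hV, hxV⟩ := hAF hxA
    obtain ⟨W, hW, hxW⟩ := hBG hxB
    exact ⟨V ∩ T^[m] ⁻¹' W,
      Finset.mem_image.2 ⟨(V, W), Finset.mem_product.2 ⟨hV, hW⟩, rfl⟩, hxV, hxW⟩

end RefinedCovers

section CoverEntropy

/-- The topological entropy of `T` relative to the cover `U`, given by Fekete's formula
`inf_{n ≥ 1} (1/n) log N(U^n)`. -/
noncomputable def coverEnt (T : X → X) (U : Finset (Set X)) : ℝ :=
  sInf ((fun n : ℕ => Real.log (dynCoverNum T U n univ) / n) '' Ici 1)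

variable {U : Finset (Set X)}

theorem bddBelow_range_log_dynCoverNum_div (T : X → X) (U : Finset (Set X)) :
    BddBelow (range fun n : ℕ => Real.log (dynCoverNum T U n univ) / n) :=
  ⟨0, forall_mem_range.2 fun n => div_nonneg (Real.log_natCast_nonneg _) n.cast_nonneg⟩

variable [Nonempty X]

theorem subadditive_log_dynCoverNum (T : X → X) (hU : ⋃₀ (U : Set (Set X)) = univ) :
    Subadditive fun n => Real.log (dynCoverNum T U n univ) := by
  intro m n
  have hpos : ∀ n, (0 : ℝ) < dynCoverNum T U n univ := fun n =>
    Nat.cast_pos.2 (dynCoverNum_univ_pos T hU n)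
  have hmul := dynCoverNum_add_le T hU m n univ univ
  rw [preimage_univ, inter_univ] at hmul
  rw [← Real.log_mul (hpos m).ne' (hpos n).ne']
  exact Real.log_le_log (hpos _) (mod_cast hmul)

theorem tendsto_log_dynCoverNum_div (T : X → X) (hU : ⋃₀ (U : Set (Set X)) = univ) :
    Tendsto (fun n : ℕ => Real.log (dynCoverNum T U n univ) / n) atTop (𝓝 (coverEnt T U)) := by
  have h := (subadditive_log_dynCoverNum T hU).tendsto_lim
    (bddBelow_range_log_dynCoverNum_div T U)
  rwa [Subadditive.lim] at h

theorem exp_coverEnt_le_dynCoverNum (T : X → X) (hU : ⋃₀ (U : Set (Set X)) = univ) (n : ℕ) :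
    Real.exp (n * coverEnt T U) ≤ dynCoverNum T U n univ := by
  have hpos : (0 : ℝ) < dynCoverNum T U n univ := Nat.cast_pos.2 (dynCoverNum_univ_pos T hU n)
  rw [← Real.le_log_iff_exp_le hpos]
  rcases n.eq_zero_or_pos with rfl | hn
  · simpa using Real.log_natCast_nonneg _
  · rw [mul_comm, ← le_div_iff₀ (Nat.cast_pos.2 hn)]
    exact csInf_le ((bddBelow_range_log_dynCoverNum_div T U).mono (image_subset_range _ _))
      ⟨n, hn, rfl⟩

theorem eventually_dynCoverNum_le_exp (T : X → X) (hU : ⋃₀ (U : Set (Set X)) = univ) {b : ℝ}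
    (hb : coverEnt T U < b) :
    ∀ᶠ n : ℕ in atTop, (dynCoverNum T U n univ : ℝ) ≤ Real.exp (n * b) := by
  filter_upwards [(tendsto_log_dynCoverNum_div T hU).eventually_lt_const hb,
    eventually_gt_atTop 0] with n hlt hn
  rw [div_lt_iff₀ (Nat.cast_pos.2 hn), mul_comm] at hlt
  rw [← Real.log_le_iff_le_exp (Nat.cast_pos.2 (dynCoverNum_univ_pos T hU n))]
  exact hlt.le

end CoverEntropy

section Visits

/-- The number of times `i < m` at which the orbit of `x` is in `A`. -/
noncomputable def visitCount (T : X → X) (A : Set X) (m : ℕ) (x : X) : ℕ :=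
  birkhoffSum T (A.indicator 1) m x

theorem visitCount_zero (T : X → X) (A : Set X) (x : X) : visitCount T A 0 x = 0 :=
  birkhoffSum_zero ..

theorem visitCount_succ_of_mem {T : X → X} {A : Set X} {x : X} (hx : x ∈ A) (m : ℕ) :
    visitCount T A (m + 1) x = visitCount T A m (T x) + 1 := by
  rw [visitCount, birkhoffSum_succ', indicator_of_mem hx, Pi.one_apply, add_comm, visitCount]

theorem visitCount_succ_of_notMem {T : X → X} {A : Set X} {x : X} (hx : x ∉ A) (m : ℕ) :
    visitCount T A (m + 1) x = visitCount T A m (T x) := by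
  rw [visitCount, birkhoffSum_succ', indicator_of_notMem hx, zero_add, visitCount]

theorem visitCount_mono_time (T : X → X) (A : Set X) (x : X) :
    Monotone fun m => visitCount T A m x :=
  monotone_nat_of_le_succ fun m => by
    rw [visitCount, visitCount, birkhoffSum_succ]
    exact Nat.le_add_right _ _

theorem birkhoffSum_mul {M : Type*} [AddCommMonoid M] (T : X → X) (g : X → M) (n m : ℕ) (x : X) :
    birkhoffSum T g (n * m) x = ∑ j ∈ Finset.range n, birkhoffSum T^[n] g m (T^[j] x) := by
  induction m with
  | zero => simp
  | succ m ih =>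
    simp only [Nat.mul_succ, birkhoffSum_add, birkhoffSum_succ, ih, Finset.sum_add_distrib]
    congr 1
    refine Finset.sum_congr rfl fun j _ => ?_
    rw [← Function.iterate_add_apply, ← Function.iterate_mul, ← Function.iterate_add_apply,
      add_comm]

theorem exists_le_visitCount_iterate {T : X → X} {A : Set X} {K N n m k : ℕ} (hN : N ≤ n * m)
    (hk : n * k < K + n) {x : X} (hx : K ≤ visitCount T A N x) :
    ∃ j < n, k ≤ visitCount T^[n] A m (T^[j] x) := by
  by_contra! hlt
  have hsum : K ≤ ∑ j ∈ Finset.range n, visitCount T^[n] A m (T^[j] x) :=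
    (hx.trans (visitCount_mono_time T A x hN)).trans_eq (birkhoffSum_mul ..)
  have hle : ∑ j ∈ Finset.range n, (visitCount T^[n] A m (T^[j] x) + 1) ≤ n * k :=
    (Finset.sum_le_card_nsmul _ _ k fun j hj => hlt j (Finset.mem_range.1 hj)).trans_eq (by simp)
  rw [Finset.sum_add_distrib, Finset.sum_const, Finset.card_range, smul_eq_mul, mul_one] at hle
  omega

variable {U : Finset (Set X)}

-- Each of the `m` blocks of length `n` contributes a factor `N(U^n, A)` if it starts in `A` and
-- `N(U^n)` otherwise; the `2 ^ m` accounts for the choice of the blocks that start in `A`.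
theorem dynCoverNum_visitCount_iterate_mul_pow_le (T : X → X)
    (hU : ⋃₀ (U : Set (Set X)) = univ) (n : ℕ) (A : Set X) (m k : ℕ) :
    dynCoverNum T U (n * m) {x | k ≤ visitCount T^[n] A m x} * dynCoverNum T U n univ ^ k ≤
      (2 * dynCoverNum T U n univ) ^ m * dynCoverNum T U n A ^ k := by
  set Q := dynCoverNum T U n univ
  set P := dynCoverNum T U n A
  have hblock : ∀ m (B D : Set X), dynCoverNum T U (n * (m + 1)) (B ∩ T^[n] ⁻¹' D) ≤
      dynCoverNum T U n B * dynCoverNum T U (n * m) D := fun m B D =>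
    (by ring : n * (m + 1) = n + n * m) ▸ dynCoverNum_add_le T hU n (n * m) B D
  induction m generalizing k with
  | zero =>
    rcases k with _ | k
    · simpa using dynCoverNum_zero_le_one T U _
    · simp [visitCount_zero, dynCoverNum, coverNumOn_empty]
  | succ m ih =>
    rcases k with _ | k
    · have hm := ih 0
      have hstep := hblock m univ univ
      simp only [zero_le, ofPred_true, pow_zero, mul_one, preimage_univ, inter_univ] at hm hstep ⊢
      calc _ ≤ Q * dynCoverNum T U (n * m) univ := hstep
        _ ≤ (2 * Q) * (2 * Q) ^ m := Nat.mul_le_mul (by omega) hm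
        _ = (2 * Q) ^ (m + 1) := by ring
    · have hsplit : {x | k + 1 ≤ visitCount T^[n] A (m + 1) x} ⊆
          (A ∩ T^[n] ⁻¹' {x | k ≤ visitCount T^[n] A m x}) ∪
            (univ ∩ T^[n] ⁻¹' {x | k + 1 ≤ visitCount T^[n] A m x}) := by
        intro x hx
        by_cases hxA : x ∈ A
        · exact .inl ⟨hxA, by simpa [visitCount_succ_of_mem hxA] using hx⟩
        · exact .inr ⟨trivial, by simpa [visitCount_succ_of_notMem hxA] using hx⟩
      have hle := (dynCoverNum_mono T hU (n * (m + 1)) hsplit).trans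
        ((dynCoverNum_union_le T hU _ _ _).trans (add_le_add (hblock m _ _) (hblock m _ _)))
      have hk := ih k
      have hk' := ih (k + 1)
      set a := dynCoverNum T U (n * m) {x | k ≤ visitCount T^[n] A m x}
      set a' := dynCoverNum T U (n * m) {x | k + 1 ≤ visitCount T^[n] A m x}
      calc _ ≤ (P * a + Q * a') * Q ^ (k + 1) := Nat.mul_le_mul_right _ hle
        _ = P * Q * (a * Q ^ k) + Q * (a' * Q ^ (k + 1)) := by ring
        _ ≤ P * Q * ((2 * Q) ^ m * P ^ k) + Q * ((2 * Q) ^ m * P ^ (k + 1)) := by gcongr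
        _ = (2 * Q) ^ (m + 1) * P ^ (k + 1) := by ring

theorem dynCoverNum_visitCount_mul_pow_le (T : X → X) (hU : ⋃₀ (U : Set (Set X)) = univ)
    (A : Set X) {K N n m k : ℕ} (hN : N ≤ n * m) (hk : n * k < K + n) :
    dynCoverNum T U N {x | K ≤ visitCount T A N x} * dynCoverNum T U n univ ^ k ≤
      n * dynCoverNum T U n univ *
        ((2 * dynCoverNum T U n univ) ^ m * dynCoverNum T U n A ^ k) := by
  set D := {x | k ≤ visitCount T^[n] A m x}
  have hsub : {x | K ≤ visitCount T A N x} ⊆ ⋃ j ∈ Finset.range n, univ ∩ T^[j] ⁻¹' D := by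
    intro x hx
    obtain ⟨j, hj, hjk⟩ := exists_le_visitCount_iterate hN hk hx
    exact mem_biUnion (Finset.mem_range.2 hj) ⟨trivial, hjk⟩
  have hshift : ∀ j ∈ Finset.range n, dynCoverNum T U N (univ ∩ T^[j] ⁻¹' D) ≤
      dynCoverNum T U n univ * dynCoverNum T U (n * m) D := fun j hj =>
    calc _ ≤ dynCoverNum T U (j + n * m) (univ ∩ T^[j] ⁻¹' D) :=
          dynCoverNum_mono_time T hU (by omega) _
      _ ≤ dynCoverNum T U j univ * dynCoverNum T U (n * m) D := dynCoverNum_add_le T hU _ _ _ _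
      _ ≤ dynCoverNum T U n univ * dynCoverNum T U (n * m) D := by
          gcongr
          exact dynCoverNum_mono_time T hU (Finset.mem_range.1 hj).le _
  have hle := (dynCoverNum_mono T hU N hsub).trans
    ((dynCoverNum_biUnion_le T hU N _ _).trans (Finset.sum_le_card_nsmul _ _ _ hshift))
  rw [Finset.card_range, smul_eq_mul, ← mul_assoc] at hle
  calc _ ≤ n * dynCoverNum T U n univ * dynCoverNum T U (n * m) D * dynCoverNum T U n univ ^ k :=
        Nat.mul_le_mul_right _ hle
    _ ≤ _ := by
        rw [mul_assoc]
        exact Nat.mul_le_mul_left _ (dynCoverNum_visitCount_iterate_mul_pow_le T hU n A m k)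

theorem exists_nat_mul_ge_of_ne_zero {n : ℕ} (hn : n ≠ 0) (K : ℕ) :
    ∃ k, K ≤ n * k ∧ n * k < K + n := by
  refine ⟨(K + n - 1) / n, ?_, ?_⟩
  · have := Nat.lt_mul_div_succ (K + n - 1) (Nat.pos_of_ne_zero hn)
    rw [mul_add, mul_one] at this
    omega
  · have := Nat.mul_div_le (K + n - 1) n
    omega

theorem dynCoverNum_visitCount_le_exp [Nonempty X] (T : X → X)
    (hU : ⋃₀ (U : Set (Set X)) = univ) {A : Set X} {n : ℕ} (hn : n ≠ 0) {γ b θ : ℝ} (hγ : 0 ≤ γ)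
    (hA : (dynCoverNum T U n A : ℝ) ≤ Real.exp (n * (coverEnt T U - γ)))
    (hb : (2 * dynCoverNum T U n univ : ℝ) ≤ Real.exp (n * b)) (N : ℕ) :
    (dynCoverNum T U N {x | θ * N ≤ visitCount T A N x} : ℝ) ≤
      n * dynCoverNum T U n univ * Real.exp (n * b) * Real.exp (N * (b - θ * γ)) := by
  obtain ⟨m, hNm, hmN⟩ := exists_nat_mul_ge_of_ne_zero hn N
  obtain ⟨k, hKk, hkK⟩ := exists_nat_mul_ge_of_ne_zero hn ⌈θ * N⌉₊
  have hcount : (dynCoverNum T U N {x | θ * N ≤ visitCount T A N x} : ℝ) *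
        (dynCoverNum T U n univ : ℝ) ^ k ≤ n * dynCoverNum T U n univ *
          ((2 * dynCoverNum T U n univ) ^ m * (dynCoverNum T U n A : ℝ) ^ k) := by
    simp only [← Nat.ceil_le]
    exact_mod_cast dynCoverNum_visitCount_mul_pow_le T hU A hNm hkK
  set Q := (dynCoverNum T U n univ : ℝ)
  have hQ : 1 ≤ Q := Nat.one_le_cast.2 (dynCoverNum_univ_pos T hU n)
  have hb0 : 0 ≤ b := by
    have h0 : 0 ≤ n * b := Real.one_le_exp_iff.1 (by linarith)
    exact nonneg_of_mul_nonneg_right h0 (Nat.cast_pos.2 (Nat.pos_of_ne_zero hn))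
  have hm : (n * m : ℝ) ≤ N + n := mod_cast hmN.le
  have hk : θ * N ≤ n * k := (Nat.le_ceil _).trans (mod_cast hKk)
  have hPQ : (dynCoverNum T U n A : ℝ) ≤ Q * Real.exp (-(n * γ)) := by
    refine hA.trans ?_
    rw [mul_sub, sub_eq_add_neg, Real.exp_add]
    gcongr
    exact exp_coverEnt_le_dynCoverNum T hU n
  refine le_of_mul_le_mul_right ?_ (pow_pos (zero_lt_one.trans_le hQ) k)
  calc _ ≤ n * Q * (Real.exp (n * b) ^ m * (Q * Real.exp (-(n * γ))) ^ k) := by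
        refine hcount.trans ?_
        gcongr
    _ = n * Q * Real.exp (m * (n * b) + k * (-(n * γ))) * Q ^ k := by
        rw [mul_pow, ← Real.exp_nat_mul, ← Real.exp_nat_mul, Real.exp_add]
        ring
    _ ≤ n * Q * Real.exp (n * b + N * (b - θ * γ)) * Q ^ k := by
        gcongr n * Q * ?_ * Q ^ k
        refine Real.exp_le_exp.2 ?_
        linarith [mul_le_mul_of_nonneg_right hm hb0, mul_le_mul_of_nonneg_right hk hγ]
    _ = _ := by rw [Real.exp_add, ← mul_assoc]

end Visits

section EntropyNegligible

/-- A sequence of sets is entropy negligible for the cover `U` if covering `A n` by cells of `U^n`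
takes exponentially fewer cells than covering the whole space. -/
def EntropyNegligible (T : X → X) (U : Finset (Set X)) (A : ℕ → Set X) : Prop :=
  ∃ γ > 0, ∀ᶠ n : ℕ in atTop,
    (dynCoverNum T U n (A n) : ℝ) ≤ Real.exp (n * (coverEnt T U - γ))

theorem eventually_le_natCast_mul (C : ℝ) {η : ℝ} (hη : 0 < η) : ∀ᶠ n : ℕ in atTop, C ≤ n * η :=
  (tendsto_natCast_atTop_atTop.atTop_mul_const hη).eventually_ge_atTop C

variable {T : X → X} {U : Finset (Set X)} {A B : ℕ → Set X}

theorem EntropyNegligible.mono (hU : ⋃₀ (U : Set (Set X)) = univ) (hB : EntropyNegligible T U B)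
    (h : ∀ᶠ n in atTop, A n ⊆ B n) : EntropyNegligible T U A := by
  obtain ⟨γ, hγ, hBγ⟩ := hB
  refine ⟨γ, hγ, ?_⟩
  filter_upwards [hBγ, h] with n hn hAB
  exact (Nat.cast_le.2 (dynCoverNum_mono T hU n hAB)).trans hn

theorem entropyNegligible_empty (T : X → X) (U : Finset (Set X)) :
    EntropyNegligible T U fun _ => ∅ :=
  ⟨1, one_pos, .of_forall fun n => by
    rw [dynCoverNum, coverNumOn_empty, Nat.cast_zero]
    exact (Real.exp_pos _).le⟩

theorem EntropyNegligible.union (hU : ⋃₀ (U : Set (Set X)) = univ)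
    (hA : EntropyNegligible T U A) (hB : EntropyNegligible T U B) :
    EntropyNegligible T U fun n => A n ∪ B n := by
  obtain ⟨γ, hγ, hAγ⟩ := hA
  obtain ⟨γ', hγ', hBγ'⟩ := hB
  obtain ⟨c, hc, hcmin⟩ := exists_between (lt_min hγ hγ')
  set a := min γ γ' - c
  have ha : 0 < a := sub_pos.2 hcmin
  refine ⟨c, hc, ?_⟩
  filter_upwards [hAγ, hBγ', eventually_le_natCast_mul (Real.log 2) ha] with n hAn hBn hlog
  have htwo : 2 ≤ Real.exp (n * a) := (Real.log_le_iff_le_exp two_pos).1 hlog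
  have hexp : ∀ t, min γ γ' ≤ t →
      Real.exp (n * (coverEnt T U - t)) ≤ Real.exp (n * (coverEnt T U - (a + c))) := fun t ht => by
    gcongr
    simpa [a] using ht
  calc (dynCoverNum T U n (A n ∪ B n) : ℝ)
      ≤ dynCoverNum T U n (A n) + dynCoverNum T U n (B n) :=
        mod_cast dynCoverNum_union_le T hU n _ _
    _ ≤ 2 * Real.exp (n * (coverEnt T U - (a + c))) := by
        linarith [hexp γ (min_le_left _ _), hexp γ' (min_le_right _ _)]
    _ ≤ Real.exp (n * a) * Real.exp (n * (coverEnt T U - (a + c))) := by gcongr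
    _ = Real.exp (n * (coverEnt T U - c)) := by rw [← Real.exp_add]; ring_nf

theorem not_entropyNegligible_univ [Nonempty X] (T : X → X)
    (hU : ⋃₀ (U : Set (Set X)) = univ) : ¬ EntropyNegligible T U fun _ => univ := by
  rintro ⟨γ, hγ, hle⟩
  obtain ⟨n, hn, hpos⟩ := (hle.and (eventually_gt_atTop 0)).exists
  have hexp := Real.exp_le_exp.1 ((exp_coverEnt_le_dynCoverNum T hU n).trans hn)
  nlinarith [mul_pos (Nat.cast_pos (α := ℝ).2 hpos) hγ]

theorem EntropyNegligible.eventually_visitCount [Nonempty X]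
    (hU : ⋃₀ (U : Set (Set X)) = univ) (hA : EntropyNegligible T U A) {θ : ℝ} (hθ : 0 < θ) :
    ∀ᶠ n in atTop, EntropyNegligible T U fun N => {x | θ * N ≤ visitCount T (A n) N x} := by
  obtain ⟨γ, hγ, hAγ⟩ := hA
  set η := θ * γ / 4
  have hη : 0 < η := by positivity
  filter_upwards [hAγ, eventually_le_natCast_mul (Real.log 2) hη,
    eventually_dynCoverNum_le_exp T hU (lt_add_of_pos_right (coverEnt T U) hη),
    eventually_ne_atTop 0] with n hAn hlog hQ hn
  have htwo : (2 * dynCoverNum T U n univ : ℝ) ≤ Real.exp (n * (coverEnt T U + 2 * η)) :=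
    calc (2 * dynCoverNum T U n univ : ℝ)
        ≤ Real.exp (n * η) * Real.exp (n * (coverEnt T U + η)) := by
          gcongr
          exact (Real.log_le_iff_le_exp two_pos).1 hlog
      _ = Real.exp (n * (coverEnt T U + 2 * η)) := by rw [← Real.exp_add]; ring_nf
  set C := n * dynCoverNum T U n univ * Real.exp (n * (coverEnt T U + 2 * η))
  have hC : 0 < C := mul_pos (mul_pos (Nat.cast_pos.2 (Nat.pos_of_ne_zero hn))
    (Nat.cast_pos.2 (dynCoverNum_univ_pos T hU n))) (Real.exp_pos _)
  refine ⟨η, hη, ?_⟩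
  filter_upwards [eventually_le_natCast_mul (Real.log C) hη] with N hN
  calc (dynCoverNum T U N {x | θ * N ≤ visitCount T (A n) N x} : ℝ)
      ≤ C * Real.exp (N * (coverEnt T U + 2 * η - θ * γ)) :=
        dynCoverNum_visitCount_le_exp T hU hn hγ.le hAn htwo N
    _ ≤ Real.exp (N * η) * Real.exp (N * (coverEnt T U + 2 * η - θ * γ)) := by
        gcongr
        exact (Real.log_le_iff_le_exp hC).1 hN
    _ = Real.exp (N * (coverEnt T U - η)) := by
        rw [← Real.exp_add]
        congr 1
        simp only [η]
        ring

end EntropyNegligible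

section EmpiricalMeasures

open scoped NNReal

variable [MeasurableSpace X] {T : X → X} {n : ℕ} {x : X}

/-- The empirical measure `(1/n) ∑_{i<n} δ_{T^i x}` of an orbit segment. The value at `n = 0` is
chosen to be `δ_x` in order to have a probability measure for every `n`. -/
noncomputable def empiricalMeasure (T : X → X) (n : ℕ) (x : X) : ProbabilityMeasure X :=
  if hn : n = 0 then ⟨Measure.dirac x, inferInstance⟩
  else ⟨birkhoffAverage ℝ≥0 T Measure.dirac n x, ⟨by
    simp [birkhoffAverage, birkhoffSum, ENNReal.smul_def, ENNReal.coe_inv, hn,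
      ENNReal.inv_mul_cancel]⟩⟩

theorem coe_empiricalMeasure (hn : n ≠ 0) :
    (empiricalMeasure T n x : Measure X) = birkhoffAverage ℝ≥0 T Measure.dirac n x := by
  simp [empiricalMeasure, hn]

theorem integral_empiricalMeasure [MeasurableSingletonClass X] {E : Type*} [NormedAddCommGroup E]
    [NormedSpace ℝ E] [CompleteSpace E] (hn : n ≠ 0) (f : X → E) :
    ∫ y, f y ∂(empiricalMeasure T n x : Measure X) = birkhoffAverage ℝ T f n x := by
  rw [coe_empiricalMeasure hn, birkhoffAverage, birkhoffSum, integral_smul_nnreal_measure,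
    integral_finsetSum_measure fun i _ => integrable_dirac (by simp)]
  simp [birkhoffAverage, birkhoffSum, NNReal.smul_def]

theorem empiricalMeasure_real_apply [MeasurableSingletonClass X] {A : Set X}
    (hA : MeasurableSet A) (hn : n ≠ 0) :
    (empiricalMeasure T n x : Measure X).real A = visitCount T A n x / n := by
  rw [← integral_indicator_one hA, integral_empiricalMeasure hn]
  simp only [visitCount, birkhoffAverage, birkhoffSum, Nat.cast_sum, smul_eq_mul, div_eq_inv_mul]
  congr! 2 with i
  by_cases hi : T^[i] x ∈ A <;> simp [hi]

theorem continuous_empiricalMeasure [TopologicalSpace X] [CompactSpace X]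
    [OpensMeasurableSpace X] [MeasurableSingletonClass X] (hT : Continuous T) (n : ℕ) :
    Continuous (empiricalMeasure T n) := by
  rw [ProbabilityMeasure.continuous_iff_forall_continuousMap_continuous_integral]
  intro f
  rcases eq_or_ne n 0 with rfl | hn
  · simpa [empiricalMeasure] using f.continuous
  · simp only [integral_empiricalMeasure hn, birkhoffAverage, birkhoffSum, smul_eq_mul]
    exact continuous_const.mul
      (continuous_finsetSum _ fun i _ => f.continuous.comp (hT.iterate i))

end EmpiricalMeasures

section FullGrowth

variable [TopologicalSpace X] [MeasurableSpace X] [OpensMeasurableSpace X]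
  {T : X → X} {U : Finset (Set X)}

/-- The measures each of whose neighbourhoods contains the empirical measures of so many orbits
that these are not entropy negligible: the limits of the empirical measures that carry the full
entropy of the cover `U`. -/
def fullGrowthMeasures (T : X → X) (U : Finset (Set X)) : Set (ProbabilityMeasure X) :=
  {μ | ∀ G ∈ 𝓝 μ, ¬ EntropyNegligible T U fun n => {x | empiricalMeasure T n x ∈ G}}

theorem exists_entropyNegligible_of_notMem_fullGrowthMeasures {μ : ProbabilityMeasure X}
    (hμ : μ ∉ fullGrowthMeasures T U) :
    ∃ G ∈ 𝓝 μ, EntropyNegligible T U fun n => {x | empiricalMeasure T n x ∈ G} := by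
  simpa [fullGrowthMeasures] using hμ

theorem isClosed_fullGrowthMeasures : IsClosed (fullGrowthMeasures T U) := by
  rw [← isOpen_compl_iff, isOpen_iff_mem_nhds]
  intro μ hμ
  obtain ⟨G, hG, hneg⟩ := exists_entropyNegligible_of_notMem_fullGrowthMeasures hμ
  filter_upwards [eventually_mem_nhds_iff.2 hG] with ν hν hfull
  exact hfull G hν hneg

theorem entropyNegligible_of_isCompact_of_disjoint (hU : ⋃₀ (U : Set (Set X)) = univ)
    {K : Set (ProbabilityMeasure X)} (hK : IsCompact K)
    (hdisj : Disjoint K (fullGrowthMeasures T U)) :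
    EntropyNegligible T U fun n => {x | empiricalMeasure T n x ∈ K} := by
  refine hK.induction_on
    (p := fun S => EntropyNegligible T U fun n => {x | empiricalMeasure T n x ∈ S})
    (entropyNegligible_empty T U) (fun S S' hSS' hS' => ?_) (fun S S' hS hS' => ?_) (fun μ hμ => ?_)
  · exact hS'.mono hU (.of_forall fun n x hx => hSS' hx)
  · exact hS.union hU hS'
  · obtain ⟨G, hG, hneg⟩ :=
      exists_entropyNegligible_of_notMem_fullGrowthMeasures (disjoint_left.1 hdisj hμ)
    exact ⟨G, mem_nhdsWithin_of_mem_nhds hG, hneg⟩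

theorem mem_of_mem_fullGrowthMeasures (hU : ⋃₀ (U : Set (Set X)) = univ)
    {μ : ProbabilityMeasure X} (hμ : μ ∈ fullGrowthMeasures T U) {S : Set (ProbabilityMeasure X)}
    (hS : IsClosed S) (hemp : ∀ᶠ n in atTop, ∀ x, empiricalMeasure T n x ∈ S) : μ ∈ S := by
  by_contra hμS
  refine hμ Sᶜ (hS.isOpen_compl.mem_nhds hμS) ((entropyNegligible_empty T U).mono hU ?_)
  filter_upwards [hemp] with n hn x hx using hx (hn x)

end FullGrowth

section FullGrowthCompact

variable [TopologicalSpace X] [CompactSpace X] [T2Space X] [MeasurableSpace X] [BorelSpace X]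
  {T : X → X} {U : Finset (Set X)}

theorem nonempty_fullGrowthMeasures [Nonempty X] (hU : ⋃₀ (U : Set (Set X)) = univ) :
    (fullGrowthMeasures T U).Nonempty := by
  by_contra hempty
  have hneg : EntropyNegligible T U fun n => {x | empiricalMeasure T n x ∈ univ} :=
    entropyNegligible_of_isCompact_of_disjoint hU isCompact_univ
      (by simp [not_nonempty_iff_eq_empty.1 hempty])
  exact not_entropyNegligible_univ T hU (by simpa using hneg)

theorem dist_integral_comp_empiricalMeasure_le (T : X → X) {n : ℕ} (hn : n ≠ 0) (x : X)
    (f : C(X, ℝ)) :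
    dist (∫ y, f (T y) ∂(empiricalMeasure T n x : Measure X))
      (∫ y, f y ∂(empiricalMeasure T n x : Measure X)) ≤ 2 * ‖f‖ / n := by
  have hshift : birkhoffAverage ℝ T (fun y => f (T y)) n x = birkhoffAverage ℝ T f n (T x) := by
    simp only [birkhoffAverage, birkhoffSum, ← Function.iterate_succ_apply',
      ← Function.iterate_succ_apply]
  rw [integral_empiricalMeasure hn fun y => f (T y), integral_empiricalMeasure hn f, hshift,
    dist_birkhoffAverage_apply_birkhoffAverage]
  gcongr
  rw [two_mul]
  exact (dist_le_norm_add_norm _ _).trans (add_le_add (f.norm_coe_le_norm _) (f.norm_coe_le_norm _))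

theorem measurePreserving_of_mem_fullGrowthMeasures [HasOuterApproxClosed X] (hT : Continuous T)
    (hU : ⋃₀ (U : Set (Set X)) = univ) {μ : ProbabilityMeasure X}
    (hμ : μ ∈ fullGrowthMeasures T U) : MeasurePreserving T (μ : Measure X) μ := by
  refine ⟨hT.measurable, ?_⟩
  have := Measure.isProbabilityMeasure_map (μ := (μ : Measure X)) hT.measurable.aemeasurable
  refine ext_of_forall_integral_eq_of_IsFiniteMeasure fun f => ?_
  rw [integral_map hT.measurable.aemeasurable f.continuous.aestronglyMeasurable]
  refine dist_le_zero.1 (le_of_forall_pos_le_add fun ε hε => ?_)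
  let g : C(X, ℝ) := f
  have hclosed : IsClosed {ν : ProbabilityMeasure X |
      dist (∫ y, g (T y) ∂(ν : Measure X)) (∫ y, g y ∂(ν : Measure X)) ≤ 0 + ε} :=
    isClosed_le ((ProbabilityMeasure.continuous_integral_continuousMap (g.comp ⟨T, hT⟩)).dist
      (ProbabilityMeasure.continuous_integral_continuousMap g)) continuous_const
  refine mem_of_mem_fullGrowthMeasures hU hμ hclosed ?_
  filter_upwards [eventually_le_natCast_mul (2 * ‖g‖) hε, eventually_ne_atTop 0] with n hn hn0 x
  refine (dist_integral_comp_empiricalMeasure_le T hn0 x g).trans ?_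
  rw [zero_add, div_le_iff₀ (Nat.cast_pos.2 (Nat.pos_of_ne_zero hn0))]
  exact hn.trans_eq (mul_comm _ _)

end FullGrowthCompact

section VanishesOnNegligible

open scoped ENNReal

variable [TopologicalSpace X] [MeasurableSpace X] {T : X → X} {U : Finset (Set X)}

/-- The measure `μ` gives asymptotically no mass to entropy negligible sequences of open sets. -/
def VanishesOnNegligible (T : X → X) (U : Finset (Set X)) (μ : Measure X) : Prop :=
  ∀ A : ℕ → Set X, (∀ n, IsOpen (A n)) → EntropyNegligible T U A →
    Tendsto (fun n => μ (A n)) atTop (𝓝 0)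

theorem VanishesOnNegligible.of_smul_le {μ ν : Measure X} (hμ : VanishesOnNegligible T U μ)
    {c : ℝ≥0∞} (hc : c ≠ 0) (hc' : c ≠ ∞) (h : c • ν ≤ μ) : VanishesOnNegligible T U ν := by
  intro A hAopen hA
  have hlim : Tendsto (fun n => c⁻¹ * μ (A n)) atTop (𝓝 0) := by
    simpa using ENNReal.Tendsto.const_mul (hμ A hAopen hA) (.inr (ENNReal.inv_ne_top.2 hc))
  refine tendsto_of_tendsto_of_tendsto_of_le_of_le tendsto_const_nhds hlim
    (fun _ => zero_le) fun n => ?_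
  calc ν (A n) = c⁻¹ * (c • ν) (A n) := by
        rw [Measure.smul_apply, smul_eq_mul, ← mul_assoc, ENNReal.inv_mul_cancel hc hc', one_mul]
    _ ≤ c⁻¹ * μ (A n) := by gcongr

theorem vanishesOnNegligible_of_mem_fullGrowthMeasures [Nonempty X] [T1Space X]
    [HasOuterApproxClosed X] [OpensMeasurableSpace X] (hU : ⋃₀ (U : Set (Set X)) = univ)
    {μ : ProbabilityMeasure X} (hμ : μ ∈ fullGrowthMeasures T U) :
    VanishesOnNegligible T U (μ : Measure X) := by
  intro A hAopen hA
  refine ENNReal.tendsto_nhds_zero.2 fun ε hε => ?_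
  obtain ⟨θ, -, hθ, hθε⟩ := ENNReal.lt_iff_exists_real_btwn.1 hε
  have hθ0 : 0 < θ := ENNReal.ofReal_pos.1 hθ
  filter_upwards [hA.eventually_visitCount hU hθ0] with n hn
  by_contra! hμn
  have hnhds : {ν : ProbabilityMeasure X | θ < (ν : Measure X).real (A n)} ∈ 𝓝 μ := by
    have hlt := (hθε.trans hμn).trans_le
      (ProbabilityMeasure.le_liminf_measure_open_of_tendsto (L := 𝓝 μ) tendsto_id (hAopen n))
    filter_upwards [eventually_lt_of_lt_liminf hlt] with ν hν
    exact (ENNReal.ofReal_lt_iff_lt_toReal hθ0.le (measure_ne_top _ _)).1 hν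
  refine hμ _ hnhds (hn.mono hU ?_)
  filter_upwards [eventually_ne_atTop 0] with N hN x hx
  rw [mem_ofPred_eq, empiricalMeasure_real_apply (hAopen n).measurableSet hN,
    lt_div_iff₀ (Nat.cast_pos.2 (Nat.pos_of_ne_zero hN))] at hx
  exact hx.le

end VanishesOnNegligible

section ShapiraNumbers

open scoped ENNReal

variable [MeasurableSpace X] {T : X → X} {U U' : Finset (Set X)} {μ : Measure X} {δ : ℝ} {n : ℕ}

theorem shapiraNum_le_card {F : Finset (Set X)} (hF : ↑F ⊆ dynRefine T U n)
    (hμF : ENNReal.ofReal δ ≤ μ (⋃₀ (F : Set (Set X)))) : shapiraNum T μ U n δ ≤ F.card :=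
  Nat.sInf_le ⟨F, hF, hμF, rfl⟩

theorem exists_card_eq_shapiraNum (T : X → X) (hU : ⋃₀ (U : Set (Set X)) = univ)
    (hδ : ENNReal.ofReal δ ≤ μ univ) (n : ℕ) :
    ∃ F : Finset (Set X), ↑F ⊆ dynRefine T U n ∧
      ENNReal.ofReal δ ≤ μ (⋃₀ (F : Set (Set X))) ∧ F.card = shapiraNum T μ U n δ :=
  Nat.sInf_mem (show {m | ∃ F : Finset (Set X), ↑F ⊆ dynRefine T U n ∧
      ENNReal.ofReal δ ≤ μ (⋃₀ (F : Set (Set X))) ∧ F.card = m}.Nonempty from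
    ⟨_, (dynRefine_finite T U n).toFinset, by simp, by simpa [sUnion_dynRefine T hU n] using hδ,
      rfl⟩)

theorem shapiraNum_le_dynCoverNum (T : X → X) (hU : ⋃₀ (U : Set (Set X)) = univ)
    (hδ : ENNReal.ofReal δ ≤ μ univ) (n : ℕ) :
    shapiraNum T μ U n δ ≤ dynCoverNum T U n univ := by
  obtain ⟨F, hF, hcover, hcard⟩ := exists_card_eq_dynCoverNum T hU n univ
  exact hcard ▸ shapiraNum_le_card hF (hδ.trans (measure_mono hcover))

theorem shapiraNum_le_of_refines (T : X → X) (hU' : ⋃₀ (U' : Set (Set X)) = univ)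
    (h : ∀ V ∈ U', ∃ W ∈ U, V ⊆ W) (hδ : ENNReal.ofReal δ ≤ μ univ) (n : ℕ) :
    shapiraNum T μ U n δ ≤ shapiraNum T μ U' n δ := by
  obtain ⟨F, hF, hμF, hcard⟩ := exists_card_eq_shapiraNum T hU' hδ n
  obtain ⟨G, hG, hFG, hle⟩ := exists_finset_of_refines (dynRefine_refines h) hF
  exact (shapiraNum_le_card hG (hμF.trans (measure_mono hFG))).trans (hle.trans_eq hcard)

variable [TopologicalSpace X]

theorem VanishesOnNegligible.eventually_exp_lt_shapiraNum (hμ : VanishesOnNegligible T U μ)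
    (hT : Continuous T) (hU : IsFiniteOpenCover U) (hδ : 0 < δ) (hδμ : ENNReal.ofReal δ ≤ μ univ)
    {r : ℝ} (hr : r < coverEnt T U) :
    ∀ᶠ n : ℕ in atTop, Real.exp (n * r) < shapiraNum T μ U n δ := by
  choose F hF hμF hcard using exists_card_eq_shapiraNum T hU.2 hδμ
  set A : ℕ → Set X := fun n =>
    {x | (F n).card ≤ Real.exp (n * r) ∧ x ∈ ⋃₀ (F n : Set (Set X))}
  have hAopen : ∀ n, IsOpen (A n) := fun n =>
    isOpen_const.and (isOpen_sUnion fun V hV => isOpen_of_mem_dynRefine hT hU.1 (hF n hV))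
  have hA : EntropyNegligible T U A := by
    refine ⟨coverEnt T U - r, sub_pos.2 hr, .of_forall fun n => ?_⟩
    rw [sub_sub_cancel]
    by_cases hsmall : (F n).card ≤ Real.exp (n * r)
    · exact (Nat.cast_le.2 (coverNumOn_le_card (hF n) fun x hx => hx.2)).trans hsmall
    · have hempty : A n = ∅ := by simp [A, hsmall]
      simpa [hempty, dynCoverNum, coverNumOn_empty] using (Real.exp_pos _).le
  filter_upwards [(hμ A hAopen hA).eventually_lt_const (ENNReal.ofReal_pos.2 hδ)] with n hn
  by_contra! hsmall
  rw [← hcard] at hsmall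
  have hAF : A n = ⋃₀ (F n : Set (Set X)) := by
    ext x
    simp [A, hsmall]
  exact hn.not_ge (hAF ▸ hμF n)

theorem VanishesOnNegligible.coverEnt_le_shapiraEnt (hμ : VanishesOnNegligible T U μ)
    (hT : Continuous T) (hU : IsFiniteOpenCover U) (hδ : 0 < δ)
    (hδμ : ENNReal.ofReal δ ≤ μ univ) : coverEnt T U ≤ shapiraEnt T μ U δ := by
  refine EReal.ge_of_forall_gt_iff_ge.1 fun r hr => ?_
  refine le_limsup_of_frequently_le (Eventually.frequently ?_)
  filter_upwards [hμ.eventually_exp_lt_shapiraNum hT hU hδ hδμ (EReal.coe_lt_coe_iff.1 hr),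
    eventually_gt_atTop 0] with n hn hn0
  rw [EReal.coe_le_coe_iff, le_div_iff₀ (Nat.cast_pos.2 hn0), mul_comm]
  exact (Real.le_log_iff_exp_le ((Real.exp_pos _).trans hn)).2 hn.le

end ShapiraNumbers

section IntegralsOfContinuousMaps

variable [MeasurableSpace X] {E : Type*} [NormedAddCommGroup E] [NormedSpace ℝ E]

theorem integral_birkhoffAverage {T : X → X} {ν : Measure X} (hν : MeasurePreserving T ν ν)
    {h : X → E} (hh : Integrable h ν) {n : ℕ} (hn : n ≠ 0) :
    ∫ x, birkhoffAverage ℝ T h n x ∂ν = ∫ x, h x ∂ν := by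
  have hterm : ∀ i, ∫ x, h (T^[i] x) ∂ν = ∫ x, h x ∂ν := fun i => by
    conv_rhs => rw [← (hν.iterate i).map_eq]
    refine (integral_map (hν.iterate i).aemeasurable ?_).symm
    exact (hν.iterate i).map_eq.symm ▸ hh.aestronglyMeasurable
  have hintegrable : ∀ i, Integrable (fun x => h (T^[i] x)) ν := fun i =>
    (hν.iterate i).integrable_comp_of_integrable hh
  simp only [birkhoffAverage, birkhoffSum]
  rw [integral_smul, integral_finsetSum _ fun i _ => hintegrable i]
  simp [hterm, ← Nat.cast_smul_eq_nsmul ℝ, smul_smul, hn]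

variable [TopologicalSpace X] [CompactSpace X]

theorem norm_integral_continuousMap_le (ν : Measure X) [IsProbabilityMeasure ν] (h : C(X, E)) :
    ‖∫ x, h x ∂ν‖ ≤ ‖h‖ := by
  simpa using norm_integral_le_of_norm_le_const (μ := ν) (.of_forall h.norm_coe_le_norm)

theorem integrable_continuousMap {F : Type*} [NormedAddCommGroup F] [OpensMeasurableSpace X]
    (ν : Measure X) [IsFiniteMeasure ν] (h : C(X, F)) : Integrable h ν :=
  h.continuous.integrable_of_hasCompactSupport (HasCompactSupport.of_compactSpace _)

theorem continuous_integral_continuousMap [OpensMeasurableSpace X] (ν : Measure X)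
    [IsProbabilityMeasure ν] : Continuous fun h : C(X, E) => ∫ x, h x ∂ν := by
  refine (LipschitzWith.of_dist_le_mul (K := 1) fun h h' => ?_).continuous
  rw [dist_eq_norm, dist_eq_norm, NNReal.coe_one, one_mul,
    ← integral_sub (integrable_continuousMap ν h) (integrable_continuousMap ν h')]
  exact norm_integral_continuousMap_le ν (h - h')

end IntegralsOfContinuousMaps

section SeparatingMaps

variable [TopologicalSpace X] [CompactSpace X]

theorem norm_smul_le_norm_mul_norm {E : Type*} [NormedAddCommGroup E] [NormedSpace ℝ E]
    (f : C(X, ℝ)) (v : E) (x : X) : ‖f x • v‖ ≤ ‖f‖ * ‖v‖ := by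
  rw [norm_smul]
  gcongr
  exact f.norm_coe_le_norm x

variable [MeasurableSpace X]

theorem exists_summable_norm_integral_separating [TopologicalSpace.MetrizableSpace X]
    [BorelSpace X] :
    ∃ f : ℕ → C(X, ℝ), (Summable fun i => ‖f i‖) ∧ ∀ ν ν' : ProbabilityMeasure X,
      (∀ i, ∫ x, f i x ∂(ν : Measure X) = ∫ x, f i x ∂(ν' : Measure X)) → ν = ν' := by
  have : SecondCountableTopology X := inferInstance
  set d := TopologicalSpace.denseSeq C(X, ℝ)
  set c : ℕ → ℝ := fun i => (1 / 2) ^ i / (1 + ‖d i‖)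
  have hc : ∀ i, 0 < c i := fun i => by positivity
  refine ⟨fun i => c i • d i, summable_geometric_two.of_nonneg_of_le (fun i => norm_nonneg _)
    fun i => ?_, fun ν ν' hνν' => ?_⟩
  · rw [norm_smul, Real.norm_of_nonneg (hc i).le, div_mul_eq_mul_div, div_le_iff₀ (by positivity)]
    gcongr
    linarith
  · have hd : ∀ i, ∫ x, d i x ∂(ν : Measure X) = ∫ x, d i x ∂(ν' : Measure X) := fun i => by
      simpa [integral_const_mul, (hc i).ne'] using hνν' i
    have heq : (fun f : C(X, ℝ) => ∫ x, f x ∂(ν : Measure X)) =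
        fun f : C(X, ℝ) => ∫ x, f x ∂(ν' : Measure X) :=
      (TopologicalSpace.denseRange_denseSeq C(X, ℝ)).equalizer
        (continuous_integral_continuousMap _) (continuous_integral_continuousMap _) (funext hd)
    exact Subtype.ext (ext_of_forall_integral_eq_of_IsFiniteMeasure (μ := (ν : Measure X))
      (ν := (ν' : Measure X)) fun f => congrFun heq f.toContinuousMap)

section SmulSeries

variable [OpensMeasurableSpace X] {E : Type*} [NormedAddCommGroup E] {f : ℕ → C(X, ℝ)} {e : ℕ → E}

section NormedSpace

variable [NormedSpace ℝ E] [CompleteSpace E]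

theorem hasSum_integral_smul (hfe : Summable fun i => ‖f i‖ * ‖e i‖) (ν : Measure X)
    [IsProbabilityMeasure ν] :
    HasSum (fun i => (∫ x, f i x ∂ν) • e i) (∫ x, ∑' i, f i x • e i ∂ν) := by
  simp only [← integral_smul_const]
  exact hasSum_integral_of_dominated_convergence (fun i _ => ‖f i‖ * ‖e i‖)
    (fun i => ((integrable_continuousMap ν (f i)).smul_const (e i)).aestronglyMeasurable)
    (fun i => .of_forall (norm_smul_le_norm_mul_norm (f i) (e i)))
    (.of_forall fun _ => hfe) (integrable_const _)
    (.of_forall fun x =>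
      (hfe.of_norm_bounded fun i => norm_smul_le_norm_mul_norm (f i) (e i) x).hasSum)

theorem continuous_integral_tsum_smul (hfe : Summable fun i => ‖f i‖ * ‖e i‖) :
    Continuous fun ν : ProbabilityMeasure X => ∫ x, ∑' i, f i x • e i ∂(ν : Measure X) := by
  simp only [← (hasSum_integral_smul hfe _).tsum_eq]
  refine continuous_tsum (fun i =>
    (ProbabilityMeasure.continuous_integral_continuousMap (f i)).smul continuous_const) hfe
    fun i ν => ?_
  rw [norm_smul]
  gcongr
  exact norm_integral_continuousMap_le _ _

end NormedSpace

theorem inner_integral_tsum_smul [InnerProductSpace ℝ E] [CompleteSpace E] (he : Orthonormal ℝ e)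
    (hf : Summable fun i => ‖f i‖) (ν : Measure X) [IsProbabilityMeasure ν] (i : ℕ) :
    inner ℝ (e i) (∫ x, ∑' j, f j x • e j ∂ν) = ∫ x, f i x ∂ν := by
  have hsum := (innerSL ℝ (e i)).hasSum
    (hasSum_integral_smul (f := f) (e := e) (by simpa [he.norm_eq_one] using hf) ν)
  refine (hsum.unique (hasSum_single i fun j hj => ?_)).trans ?_
  · simp [he.inner_eq_zero hj.symm]
  · simp [he.norm_eq_one]

end SmulSeries

open scoped lp in
theorem exists_continuousMap_integral_injective [TopologicalSpace.MetrizableSpace X]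
    [BorelSpace X] : ∃ h : C(X, ℓ²(ℕ, ℝ)),
      Continuous (fun ν : ProbabilityMeasure X => ∫ x, h x ∂(ν : Measure X)) ∧
      Function.Injective fun ν : ProbabilityMeasure X => ∫ x, h x ∂(ν : Measure X) := by
  obtain ⟨f, hf, hsep⟩ := exists_summable_norm_integral_separating (X := X)
  set e : ℕ → ℓ²(ℕ, ℝ) := ⇑(default : HilbertBasis ℕ ℝ ℓ²(ℕ, ℝ))
  have he : Orthonormal ℝ e := (default : HilbertBasis ℕ ℝ ℓ²(ℕ, ℝ)).orthonormal
  have hfe : Summable fun i => ‖f i‖ * ‖e i‖ := by simpa [he.norm_eq_one] using hf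
  refine ⟨⟨fun x => ∑' i, f i x • e i, continuous_tsum (fun i => (f i).continuous.smul
    continuous_const) hfe fun i => norm_smul_le_norm_mul_norm (f i) (e i)⟩,
    continuous_integral_tsum_smul hfe, fun ν ν' hνν' => hsep ν ν' fun i => ?_⟩
  rw [← inner_integral_tsum_smul he hf ν i, ← inner_integral_tsum_smul he hf ν' i]
  exact congrArg (inner ℝ (e i)) hνν'

end SeparatingMaps

section ErgodicMaximizer

open scoped ENNReal

theorem integral_le_add_mul_measureReal_lt [MeasurableSpace X] {ν : Measure X}
    [IsProbabilityMeasure ν] {f : X → ℝ} (hf : Measurable f) (hfν : Integrable f ν) {c C : ℝ}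
    (hC : ∀ x, f x ≤ c + C) : ∫ x, f x ∂ν ≤ c + C * ν.real {x | c < f x} := by
  have hmeas : MeasurableSet {x | c < f x} := measurableSet_lt measurable_const hf
  have hind : Integrable ({x | c < f x}.indicator fun _ => C) ν :=
    (integrable_const C).indicator hmeas
  have hpointwise : ∀ x, f x ≤ c + {x | c < f x}.indicator (fun _ => C) x := fun x => by
    by_cases hx : c < f x
    · simpa [indicator, hx] using hC x
    · simpa [indicator, hx] using not_lt.1 hx
  calc ∫ x, f x ∂ν
      ≤ ∫ x, (c + {x | c < f x}.indicator (fun _ => C) x) ∂ν :=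
        integral_mono hfν ((integrable_const c).add hind) hpointwise
    _ = c + C * ν.real {x | c < f x} := by
        rw [integral_add (integrable_const c) hind, integral_indicator_const C hmeas]
        simp [mul_comm]

theorem integral_eq_of_norm_le_norm_integral_smul_add [MeasurableSpace X] {E : Type*}
    [NormedAddCommGroup E] [NormedSpace ℝ E] [StrictConvexSpace ℝ E] {ν₁ ν₂ : Measure X}
    {f : X → E} (hf₁ : Integrable f ν₁) (hf₂ : Integrable f ν₂) {a b : ℝ≥0∞} (ha : a ≠ 0)
    (hb : b ≠ 0) (hab : a + b = 1) (h₁ : ‖∫ x, f x ∂ν₁‖ ≤ ‖∫ x, f x ∂(a • ν₁ + b • ν₂)‖)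
    (h₂ : ‖∫ x, f x ∂ν₂‖ ≤ ‖∫ x, f x ∂(a • ν₁ + b • ν₂)‖) :
    ∫ x, f x ∂ν₁ = ∫ x, f x ∂ν₂ := by
  have ha' : a ≠ ∞ := ne_top_of_le_ne_top ENNReal.one_ne_top (hab ▸ le_self_add)
  have hb' : b ≠ ∞ := ne_top_of_le_ne_top ENNReal.one_ne_top (hab ▸ le_add_self)
  by_contra hne
  refine (norm_combo_lt_of_ne h₁ h₂ hne (ENNReal.toReal_pos ha ha') (ENNReal.toReal_pos hb hb')
    (by rw [← ENNReal.toReal_add ha' hb', hab, ENNReal.toReal_one])).ne ?_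
  rw [integral_add_measure (hf₁.smul_measure ha') (hf₂.smul_measure hb'), integral_smul_measure,
    integral_smul_measure]

variable [TopologicalSpace X] [CompactSpace X] [MeasurableSpace X] {T : X → X}
  {U : Finset (Set X)}

theorem norm_integral_le_integral_norm_integral_empiricalMeasure [OpensMeasurableSpace X]
    [MeasurableSingletonClass X] {E : Type*} [NormedAddCommGroup E] [NormedSpace ℝ E]
    [CompleteSpace E] {ν : Measure X} [IsFiniteMeasure ν] (hν : MeasurePreserving T ν ν)
    (h : C(X, E)) {n : ℕ} (hn : n ≠ 0) :
    ‖∫ x, h x ∂ν‖ ≤ ∫ x, ‖∫ y, h y ∂(empiricalMeasure T n x : Measure X)‖ ∂ν := by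
  simp only [integral_empiricalMeasure hn]
  rw [← integral_birkhoffAverage hν (integrable_continuousMap ν h) hn]
  exact norm_integral_le_integral_norm _

variable [T2Space X] [BorelSpace X]

theorem VanishesOnNegligible.eventually_integral_comp_empiricalMeasure_le {ν : Measure X}
    [IsProbabilityMeasure ν] (hν : VanishesOnNegligible T U ν) (hT : Continuous T)
    (hU : ⋃₀ (U : Set (Set X)) = univ) {Φ : ProbabilityMeasure X → ℝ} (hΦ : Continuous Φ) {c b : ℝ}
    (hc : ∀ μ ∈ fullGrowthMeasures T U, Φ μ ≤ c) (hcb : c < b) :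
    ∀ᶠ n in atTop, ∫ x, Φ (empiricalMeasure T n x) ∂ν ≤ b := by
  obtain ⟨a, hca, hab⟩ := exists_between hcb
  obtain ⟨M, hM⟩ := (isCompact_range hΦ).bddAbove
  have hcont : ∀ n, Continuous fun x => Φ (empiricalMeasure T n x) := fun n =>
    hΦ.comp (continuous_empiricalMeasure hT n)
  have hdisj : Disjoint {μ | a ≤ Φ μ} (fullGrowthMeasures T U) :=
    disjoint_left.2 fun μ hμ hμ' => (hca.trans_le hμ).not_ge (hc μ hμ')
  have hnegl : EntropyNegligible T U fun n => {x | a < Φ (empiricalMeasure T n x)} :=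
    (entropyNegligible_of_isCompact_of_disjoint hU (isClosed_le continuous_const hΦ).isCompact
      hdisj).mono hU (.of_forall fun n x hx => (show a < Φ (empiricalMeasure T n x) from hx).le)
  have hlim : Tendsto (fun n => a + (M - a) * ν.real {x | a < Φ (empiricalMeasure T n x)}) atTop
      (𝓝 a) := by
    simpa [Measure.real] using ((ENNReal.tendsto_toReal ENNReal.zero_ne_top).comp
      (hν _ (fun n => isOpen_lt continuous_const (hcont n)) hnegl)).const_mul (M - a)
      |>.const_add a
  filter_upwards [hlim.eventually_le_const hab] with n hn
  refine (integral_le_add_mul_measureReal_lt (hcont n).measurable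
    (integrable_continuousMap ν ⟨_, hcont n⟩) fun x => ?_).trans hn
  rw [add_sub_cancel]
  exact hM (mem_range_self _)

theorem VanishesOnNegligible.norm_integral_le {E : Type*} [NormedAddCommGroup E] [NormedSpace ℝ E]
    [CompleteSpace E] {ν : Measure X} [IsProbabilityMeasure ν] (hν : VanishesOnNegligible T U ν)
    (hνT : MeasurePreserving T ν ν) (hT : Continuous T) (hU : ⋃₀ (U : Set (Set X)) = univ)
    {h : C(X, E)} {c : ℝ}
    (hh : Continuous fun μ : ProbabilityMeasure X => ∫ x, h x ∂(μ : Measure X))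
    (hc : ∀ μ ∈ fullGrowthMeasures T U, ‖∫ x, h x ∂(μ : Measure X)‖ ≤ c) :
    ‖∫ x, h x ∂ν‖ ≤ c := by
  refine le_of_forall_gt_imp_ge_of_dense fun b hb => ?_
  obtain ⟨n, hn, hn0⟩ := ((hν.eventually_integral_comp_empiricalMeasure_le hT hU hh.norm hc hb).and
    (eventually_ne_atTop 0)).exists
  exact (norm_integral_le_integral_norm_integral_empiricalMeasure hνT h hn0).trans hn

theorem ergodic_of_norm_integral_le [Nonempty X] [HasOuterApproxClosed X]
    (hT : Continuous T) (hU : ⋃₀ (U : Set (Set X)) = univ) {E : Type*} [NormedAddCommGroup E]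
    [NormedSpace ℝ E] [CompleteSpace E] [StrictConvexSpace ℝ E] {h : C(X, E)}
    (hh : Continuous fun μ : ProbabilityMeasure X => ∫ x, h x ∂(μ : Measure X))
    (hinj : Function.Injective fun μ : ProbabilityMeasure X => ∫ x, h x ∂(μ : Measure X))
    {μ : ProbabilityMeasure X} (hμ : μ ∈ fullGrowthMeasures T U)
    (hmax : ∀ ν ∈ fullGrowthMeasures T U,
      ‖∫ x, h x ∂(ν : Measure X)‖ ≤ ‖∫ x, h x ∂(μ : Measure X)‖) :
    Ergodic T (μ : Measure X) := by
  have hμU := vanishesOnNegligible_of_mem_fullGrowthMeasures hU hμ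
  refine .of_mem_extremePoints (mem_extremePoints_iff_left.2
    ⟨⟨measurePreserving_of_mem_fullGrowthMeasures hT hU hμ, inferInstance⟩, ?_⟩)
  rintro ν₁ ⟨hν₁T, hν₁⟩ ν₂ ⟨hν₂T, hν₂⟩ ⟨a, b, ha, hb, hab, hμeq⟩
  have ha' : a ≠ ∞ := ne_top_of_le_ne_top ENNReal.one_ne_top (hab ▸ le_self_add)
  have hb' : b ≠ ∞ := ne_top_of_le_ne_top ENNReal.one_ne_top (hab ▸ le_add_self)
  have hν₁U : VanishesOnNegligible T U ν₁ :=
    hμU.of_smul_le ha.ne' ha' (hμeq ▸ Measure.le_add_right le_rfl)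
  have hν₂U : VanishesOnNegligible T U ν₂ :=
    hμU.of_smul_le hb.ne' hb' (hμeq ▸ Measure.le_add_left le_rfl)
  have hν₁₂ : ∫ x, h x ∂ν₁ = ∫ x, h x ∂ν₂ :=
    integral_eq_of_norm_le_norm_integral_smul_add (integrable_continuousMap ν₁ h)
      (integrable_continuousMap ν₂ h) ha.ne' hb.ne' hab
      (hμeq ▸ hν₁U.norm_integral_le hν₁T hT hU hh hmax)
      (hμeq ▸ hν₂U.norm_integral_le hν₂T hT hU hh hmax)
  have heq : ν₁ = ν₂ := congrArg Subtype.val (@hinj ⟨ν₁, hν₁⟩ ⟨ν₂, hν₂⟩ hν₁₂)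
  rw [← hμeq, ← heq, ← add_smul, hab, one_smul]

end ErgodicMaximizer

open scoped lp in
theorem exists_ergodic_vanishesOnNegligible [TopologicalSpace X] [CompactSpace X]
    [TopologicalSpace.MetrizableSpace X] [Nonempty X] [MeasurableSpace X] [BorelSpace X]
    {T : X → X} {U : Finset (Set X)} (hT : Continuous T) (hU : ⋃₀ (U : Set (Set X)) = univ) :
    ∃ μ ∈ ergodicMeasures T, VanishesOnNegligible T U μ := by
  obtain ⟨h, hh, hinj⟩ := exists_continuousMap_integral_injective (X := X)
  obtain ⟨μ, hμ, hmax⟩ := (isClosed_fullGrowthMeasures (T := T) (U := U)).isCompact.exists_isMaxOn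
    (nonempty_fullGrowthMeasures hU) hh.norm.continuousOn
  exact ⟨μ, ⟨inferInstance, ergodic_of_norm_integral_le hT hU hh hinj hμ hmax⟩,
    vanishesOnNegligible_of_mem_fullGrowthMeasures hU hμ⟩

section SeparatedSets

variable [MetricSpace X] {T : X → X} {n : ℕ} {r ε : ℝ}

theorem dynDist_le_iff (hr : 0 ≤ r) {x y : X} :
    dynDist T n x y ≤ r ↔ ∀ k < n, dist (T^[k] x) (T^[k] y) ≤ r := by
  refine ⟨fun h k hk => ?_, fun h => Real.iSup_le (fun k => Real.iSup_le (fun hk =>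
    h k (Finset.mem_range.1 hk)) hr) hr⟩
  have hbdd : BddAbove (range fun k => ⨆ _ : k ∈ Finset.range n, dist (T^[k] x) (T^[k] y)) :=
    ⟨∑ k ∈ Finset.range n, dist (T^[k] x) (T^[k] y), forall_mem_range.2 fun k => Real.iSup_le
      (fun hk => Finset.single_le_sum (f := fun k => dist (T^[k] x) (T^[k] y))
        (fun _ _ => dist_nonneg) hk) (Finset.sum_nonneg fun _ _ => dist_nonneg)⟩
  refine le_trans ?_ ((le_ciSup hbdd k).trans h)
  rw [ciSup_pos (Finset.mem_range.2 hk)]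

theorem dynDist_comm (T : X → X) (n : ℕ) (x y : X) : dynDist T n x y = dynDist T n y x := by
  simp only [dynDist, dist_comm]

/-- The `(n, ε)`-separated finite sets of `T`, the distances being strictly larger than `ε`. -/
def IsDynSeparated (T : X → X) (n : ℕ) (ε : ℝ) (E : Finset X) : Prop :=
  ∀ x ∈ E, ∀ y ∈ E, x ≠ y → ε < dynDist T n x y

theorem IsDynSeparated.insert [DecidableEq X] {E : Finset X} (hE : IsDynSeparated T n ε E) {y : X}
    (hy : ∀ x ∈ E, ε < dynDist T n x y) : IsDynSeparated T n ε (insert y E) := by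
  intro a ha b hb hab
  rw [Finset.mem_insert] at ha hb
  rcases ha with rfl | ha <;> rcases hb with rfl | hb
  · exact absurd rfl hab
  · exact dynDist_comm T n b a ▸ hy b hb
  · exact hy a ha
  · exact hE a ha b hb hab

variable {K : Set X} {U : Finset (Set X)}

theorem IsDynSeparated.card_le_dynCoverNum [BoundedSpace X] {E : Finset X}
    (hE : IsDynSeparated T n ε E) (hEK : ↑E ⊆ K) (hU : ⋃₀ (U : Set (Set X)) = univ) (hε : 0 ≤ ε)
    (hdiam : ∀ V ∈ U, Metric.diam V ≤ ε) : E.card ≤ dynCoverNum T U n K := by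
  obtain ⟨F, hF, hKF, hcard⟩ := exists_card_eq_dynCoverNum T hU n K
  have hcover : ∀ x ∈ E, ∃ V ∈ F, x ∈ V := fun x hx => hKF (hEK hx)
  choose! φ hφF hφ using hcover
  rw [← hcard]
  refine Finset.card_le_card_of_injOn φ hφF fun x hx y hy hxy => ?_
  by_contra hne
  refine (hE x hx y hy hne).not_ge ((dynDist_le_iff hε).2 fun k hk => ?_)
  obtain ⟨g, hg, hgφ⟩ := mem_dynRefine_iff.1 (hF (hφF x hx))
  have hxg : ∀ i < n, T^[i] x ∈ g i := hgφ.subset (hφ x hx)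
  have hyg : ∀ i < n, T^[i] y ∈ g i := hgφ.subset (hxy ▸ hφ y hy)
  exact (Metric.dist_le_diam_of_mem (Bornology.IsBounded.all _) (hxg k hk) (hyg k hk)).trans
    (hdiam _ (hg k hk))

theorem sepNum_le_dynCoverNum [BoundedSpace X] (T : X → X) (hU : ⋃₀ (U : Set (Set X)) = univ)
    (hε : 0 ≤ ε) (hdiam : ∀ V ∈ U, Metric.diam V ≤ ε) (n : ℕ) (K : Set X) :
    sepNum T n K ε ≤ dynCoverNum T U n K := by
  refine csSup_le ⟨0, ∅, by simp, by simp, rfl⟩ ?_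
  rintro _ ⟨E, hEK, hE, rfl⟩
  exact IsDynSeparated.card_le_dynCoverNum hE hEK hU hε hdiam

theorem exists_superset_mem_of_diam_le [BoundedSpace X] [Nonempty X]
    (hball : ∀ x, ∃ W ∈ U, Metric.closedBall x r ⊆ W) {V : Set X} (hV : Metric.diam V ≤ r) :
    ∃ W ∈ U, V ⊆ W := by
  rcases V.eq_empty_or_nonempty with rfl | ⟨x, hx⟩
  · obtain ⟨W, hW, -⟩ := hball (Classical.arbitrary X)
    exact ⟨W, hW, empty_subset W⟩
  · obtain ⟨W, hW, hxW⟩ := hball x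
    exact ⟨W, hW, fun y hy =>
      hxW ((Metric.dist_le_diam_of_mem (Bornology.IsBounded.all V) hy hx).trans hV)⟩

variable [CompactSpace X]

theorem exists_isFiniteOpenCover_diam_le (hr : 0 < r) :
    ∃ U : Finset (Set X), IsFiniteOpenCover U ∧ (∀ V ∈ U, Metric.diam V ≤ 4 * r) ∧
      ∀ x, ∃ W ∈ U, Metric.closedBall x r ⊆ W := by
  classical
  obtain ⟨t, -, ht, hcover⟩ := (isCompact_univ (X := X)).finite_cover_balls hr
  have hball : ∀ x, ∃ W ∈ ht.toFinset.image fun z => Metric.ball z (2 * r),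
      Metric.closedBall x r ⊆ W := fun x => by
    obtain ⟨z, hz, hxz⟩ := mem_iUnion₂.1 (hcover (mem_univ x))
    refine ⟨_, Finset.mem_image_of_mem _ (ht.mem_toFinset.2 hz), Metric.closedBall_subset_ball' ?_⟩
    linarith [Metric.mem_ball.1 hxz]
  refine ⟨_, ⟨Finset.forall_mem_image.2 fun z _ => Metric.isOpen_ball,
    eq_univ_of_forall fun x => ?_⟩, Finset.forall_mem_image.2 fun z _ => ?_, hball⟩
  · obtain ⟨W, hW, hxW⟩ := hball x
    exact ⟨W, hW, hxW (Metric.mem_closedBall_self hr.le)⟩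
  · exact (Metric.diam_ball (by positivity)).trans_eq (by ring)

theorem bddAbove_card_isDynSeparated (T : X → X) (n : ℕ) (K : Set X) (hε : 0 < ε) :
    BddAbove {m | ∃ E : Finset X, ↑E ⊆ K ∧ IsDynSeparated T n ε E ∧ E.card = m} := by
  obtain ⟨U, hU, hdiam, -⟩ := exists_isFiniteOpenCover_diam_le (X := X) (r := ε / 4) (by positivity)
  refine ⟨dynCoverNum T U n K, ?_⟩
  rintro _ ⟨E, hEK, hE, rfl⟩
  exact hE.card_le_dynCoverNum hEK hU.2 hε.le fun V hV => (hdiam V hV).trans_eq (by ring)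

theorem exists_spanning_card_eq_sepNum (T : X → X) (n : ℕ) (K : Set X) (hε : 0 < ε) :
    ∃ E : Finset X, (∀ y ∈ K, ∃ x ∈ E, dynDist T n x y ≤ ε) ∧ E.card = sepNum T n K ε := by
  classical
  have hbdd := bddAbove_card_isDynSeparated T n K hε
  obtain ⟨E, hEK, hE, hcard⟩ : ∃ E : Finset X, (E : Set X) ⊆ K ∧ IsDynSeparated T n ε E ∧
      E.card = sepNum T n K ε :=
    Nat.sSup_mem
      (show {m | ∃ E : Finset X, ↑E ⊆ K ∧ IsDynSeparated T n ε E ∧ E.card = m}.Nonempty from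
        ⟨0, ∅, by simp, by simp [IsDynSeparated], rfl⟩) hbdd
  refine ⟨E, fun y hy => ?_, hcard⟩
  by_contra! hfar
  have hyE : y ∉ E := fun hyE => (hε.trans (hfar y hyE)).not_ge
    ((dynDist_le_iff le_rfl).2 fun k _ => (dist_self _).le)
  have hle : (insert y E).card ≤ sepNum T n K ε :=
    le_csSup hbdd ⟨insert y E, by simpa [insert_subset_iff] using And.intro hy hEK,
      hE.insert hfar, rfl⟩
  rw [Finset.card_insert_of_notMem hyE] at hle
  omega

theorem dynCoverNum_le_sepNum (T : X → X) (hr : 0 < r)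
    (hball : ∀ x, ∃ W ∈ U, Metric.closedBall x r ⊆ W) (n : ℕ) (K : Set X) :
    dynCoverNum T U n K ≤ sepNum T n K r := by
  classical
  obtain ⟨E, hspan, hcard⟩ := exists_spanning_card_eq_sepNum T n K hr
  choose w hwU hw using hball
  rw [← hcard]
  refine (coverNumOn_le_card (F := E.image fun x => {y | ∀ i < n, T^[i] y ∈ w (T^[i] x)}) ?_
    fun y hy => ?_).trans Finset.card_image_le
  · rw [Finset.coe_image]
    rintro _ ⟨x, -, rfl⟩
    exact mem_dynRefine_iff.2 ⟨fun i => w (T^[i] x), fun i _ => hwU _, rfl⟩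
  · obtain ⟨x, hx, hxy⟩ := hspan y hy
    exact ⟨_, Finset.mem_image_of_mem _ hx, fun i hi =>
      hw _ (dist_comm _ _ |>.trans_le ((dynDist_le_iff hr.le).1 hxy i hi))⟩

end SeparatedSets

section Rescaling

theorem tendsto_log_one_div_nhdsGT_zero :
    Tendsto (fun ε : ℝ => Real.log (1 / ε)) (𝓝[>] 0) atTop := by
  simpa only [one_div, Function.comp_def] using Real.tendsto_log_atTop.comp tendsto_inv_nhdsGT_zero

theorem eventually_mul_log_one_div_le {c : ℝ} (hc : 0 < c) {a b : ℝ} (hab : a < b) :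
    ∀ᶠ ε in 𝓝[>] 0, a * Real.log (1 / ε) ≤ b * Real.log (1 / (c * ε)) := by
  have hlim : Tendsto (fun ε : ℝ => (b - a) * Real.log (1 / ε) - b * Real.log c) (𝓝[>] 0) atTop :=
    tendsto_atTop_add_const_right _ _
      (tendsto_log_one_div_nhdsGT_zero.const_mul_atTop (sub_pos.2 hab))
  filter_upwards [hlim.eventually_ge_atTop 0, self_mem_nhdsWithin] with ε hε hε0
  rw [← div_div, div_right_comm, Real.log_div (one_div_pos.2 hε0).ne' hc.ne']
  linarith

theorem liminf_div_log_le_of_forall_mul_le {P Q : ℝ → EReal} {c : ℝ} (hc : 0 < c)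
    (h : ∀ ε > 0, P (c * ε) ≤ Q ε) :
    liminf (fun ε => P ε / (Real.log (1 / ε) : ℝ)) (𝓝[>] 0) ≤
      liminf (fun ε => Q ε / (Real.log (1 / ε) : ℝ)) (𝓝[>] 0) := by
  refine EReal.ge_of_forall_gt_iff_ge.1 fun a ha => ?_
  obtain ⟨b, hab, hb⟩ := EReal.lt_iff_exists_real_btwn.1 ha
  have hscale : Tendsto (fun ε : ℝ => c * ε) (𝓝[>] 0) (𝓝[>] 0) := fun s hs =>
    (eventually_nhdsGT_zero_mul_left hc hs)
  refine le_liminf_of_le (by isBoundedDefault) ?_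
  filter_upwards [hscale.eventually (eventually_lt_of_lt_liminf hb),
    tendsto_log_one_div_nhdsGT_zero.eventually_gt_atTop 0,
    (tendsto_log_one_div_nhdsGT_zero.comp hscale).eventually_gt_atTop 0,
    eventually_mul_log_one_div_le hc (EReal.coe_lt_coe_iff.1 hab), self_mem_nhdsWithin]
    with ε hbP hlog hlog' hablog hε
  have hbP' := (EReal.le_div_iff_mul_le (EReal.coe_pos.2 hlog') (EReal.coe_ne_top _)).1 hbP.le
  rw [EReal.le_div_iff_mul_le (EReal.coe_pos.2 hlog) (EReal.coe_ne_top _)]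
  calc (a : EReal) * Real.log (1 / ε) ≤ b * Real.log (1 / (c * ε)) := mod_cast hablog
    _ ≤ P (c * ε) := hbP'
    _ ≤ Q ε := h ε hε

end Rescaling

section Comparison

theorem limsup_log_natCast_div_mono {a b : ℕ → ℕ} (h : ∀ n, a n ≤ b n) :
    limsup (fun n : ℕ => ((Real.log (a n) / n : ℝ) : EReal)) atTop ≤
      limsup (fun n : ℕ => ((Real.log (b n) / n : ℝ) : EReal)) atTop := by
  refine limsup_le_limsup (.of_forall fun n => EReal.coe_le_coe_iff.2 ?_)
  refine div_le_div_of_nonneg_right ?_ n.cast_nonneg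
  rcases (a n).eq_zero_or_pos with h0 | h0
  · simpa [h0] using Real.log_natCast_nonneg (b n)
  · exact Real.log_le_log (mod_cast h0) (mod_cast h n)

theorem sepEnt_le_coverEnt [MetricSpace X] [BoundedSpace X] [Nonempty X] (T : X → X)
    {U : Finset (Set X)} {ε : ℝ} (hU : ⋃₀ (U : Set (Set X)) = univ) (hε : 0 ≤ ε)
    (hdiam : ∀ V ∈ U, Metric.diam V ≤ ε) :
    sepEnt T univ ε ≤ coverEnt T U := by
  have hlim : Tendsto (fun n : ℕ => ((Real.log (dynCoverNum T U n univ) / n : ℝ) : EReal)) atTop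
      (𝓝 (coverEnt T U)) :=
    (continuous_coe_real_ereal.tendsto _).comp (tendsto_log_dynCoverNum_div T hU)
  exact hlim.limsup_eq ▸
    limsup_log_natCast_div_mono fun n => sepNum_le_dynCoverNum T hU hε hdiam n univ

variable [MeasurableSpace X] {T : X → X} {δ : ℝ}

theorem shapiraEnt_le_of_refines (T : X → X) {U U' : Finset (Set X)} {μ : Measure X}
    (hU' : ⋃₀ (U' : Set (Set X)) = univ) (h : ∀ V ∈ U', ∃ W ∈ U, V ⊆ W)
    (hδ : ENNReal.ofReal δ ≤ μ univ) : shapiraEnt T μ U δ ≤ shapiraEnt T μ U' δ :=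
  limsup_log_natCast_div_mono (shapiraNum_le_of_refines T hU' h hδ)

theorem ofReal_le_measure_univ_of_mem_ergodicMeasures {μ : Measure X} (hμ : μ ∈ ergodicMeasures T)
    (hδ : δ ≤ 1) : ENNReal.ofReal δ ≤ μ univ := by
  have := hμ.1
  simpa using hδ

variable [MetricSpace X] [CompactSpace X] {ε : ℝ}

theorem iSup_iInf_shapiraEnt_le_sepEnt (T : X → X) (hδ : δ ≤ 1) (hε : 0 < ε) :
    (⨆ μ ∈ ergodicMeasures T, ⨅ U ∈ {U : Finset (Set X) |
        IsFiniteOpenCover U ∧ ∀ V ∈ U, Metric.diam V ≤ 4 * ε}, shapiraEnt T μ U δ) ≤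
      sepEnt T univ ε := by
  obtain ⟨U, hU, hdiam, hball⟩ := exists_isFiniteOpenCover_diam_le (X := X) hε
  refine iSup₂_le fun μ hμ => iInf₂_le_of_le U ⟨hU, hdiam⟩ ?_
  exact limsup_log_natCast_div_mono fun n =>
    (shapiraNum_le_dynCoverNum T hU.2 (ofReal_le_measure_univ_of_mem_ergodicMeasures hμ hδ) n).trans
      (dynCoverNum_le_sepNum T hε hball n univ)

theorem sepEnt_le_iSup_iInf_shapiraEnt [BorelSpace X] [Nonempty X] (hT : Continuous T)
    (hδ : δ ∈ Ioc 0 1) (hε : 0 < ε) :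
    sepEnt T univ (4 * ε) ≤ ⨆ μ ∈ ergodicMeasures T, ⨅ U ∈ {U : Finset (Set X) |
        IsFiniteOpenCover U ∧ ∀ V ∈ U, Metric.diam V ≤ ε}, shapiraEnt T μ U δ := by
  obtain ⟨U, hU, hdiam, hball⟩ := exists_isFiniteOpenCover_diam_le (X := X) hε
  obtain ⟨μ, hμ, hμU⟩ := exists_ergodic_vanishesOnNegligible hT hU.2
  have hδμ := ofReal_le_measure_univ_of_mem_ergodicMeasures hμ hδ.2
  refine le_iSup₂_of_le μ hμ (le_iInf₂ fun U' hU' => ?_)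
  calc sepEnt T univ (4 * ε) ≤ coverEnt T U := sepEnt_le_coverEnt T hU.2 (by positivity) hdiam
    _ ≤ shapiraEnt T μ U δ := hμU.coverEnt_le_shapiraEnt hT hU hδ.1 hδμ
    _ ≤ shapiraEnt T μ U' δ := shapiraEnt_le_of_refines T hU'.1.2
        (fun V hV => exists_superset_mem_of_diam_le hball (hU'.2 V hV)) hδμ

end Comparison

section Theorems

variable [MetricSpace X] [CompactSpace X] [Nonempty X] [MeasurableSpace X] [BorelSpace X]

theorem lower_mdim_eq_liminf_shapira_general (T : X → X) (hT : Continuous T)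
    (δ : ℝ) (hδ : δ ∈ Set.Ioc (0 : ℝ) 1) :
    mdimLower T = liminf (fun ε : ℝ =>
      (⨆ μ ∈ ergodicMeasures T, ⨅ U ∈ {U : Finset (Set X) |
          IsFiniteOpenCover U ∧ ∀ V ∈ U, Metric.diam V ≤ ε}, shapiraEnt T μ U δ)
        / ((Real.log (1 / ε) : ℝ) : EReal)) (𝓝[>] (0 : ℝ)) :=
  le_antisymm
    (liminf_div_log_le_of_forall_mul_le four_pos fun _ => sepEnt_le_iSup_iInf_shapiraEnt hT hδ)
    (liminf_div_log_le_of_forall_mul_le four_pos fun _ => iSup_iInf_shapiraEnt_le_sepEnt T hδ.2)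

/-- Variational principle for the lower metric mean dimension in terms of Shapira's
entropy of finite open covers of small diameter (Theorem 3.2, second part). -/
theorem lower_mdim_eq_liminf_shapira (T : X → X) (hT : IsHomeomorph T)
    (δ : ℝ) (hδ : δ ∈ Set.Ioo (0:ℝ) 1) :
    mdimLower T = liminf (fun ε : ℝ =>
      (⨆ μ ∈ ergodicMeasures T, ⨅ U ∈ {U : Finset (Set X) |
          IsFiniteOpenCover U ∧ ∀ V ∈ U, Metric.diam V ≤ ε}, shapiraEnt T μ U δ)
        / ((Real.log (1 / ε) : ℝ) : EReal)) (𝓝[>] (0:ℝ)) :=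
  lower_mdim_eq_liminf_shapira_general T hT.continuous δ ⟨hδ.1, hδ.2.le⟩

end Theorems
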